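/- For every fixed pair of reals 0 ≤ u < v ≤ 1, setting k := ⌊1/(v−u)⌋, the limit lim_{x→∞} H(x, x^u, x^v)/x exists and equals 1 − Σ_ℰ ∫_{P_{u,v}(ℰ)} ρ((1 − Σ_{i=1}^k t_i)/t_k) · dt₁⋯dt_k/(t₁⋯t_k), where the sum runs over all families ℰ of subsets of {1,…,k} and each integral is the Lebesgue integral over the polytope P_{u,v}(ℰ) ⊆ ℝ^k. -/

import Mathlib

open Filter MeasureTheory

/-- `Hcnt x y z` is the number of integers `n` with `1 ≤ n ≤ x` having a divisor `d`
with `y < d < z`. -/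
noncomputable def Hcnt (x y z : ℝ) : ℕ :=
  {n : ℕ | 1 ≤ n ∧ (n : ℝ) ≤ x ∧ ∃ d : ℕ, d ∣ n ∧ y < (d : ℝ) ∧ (d : ℝ) < z}.ncard

/-- The simplex `Δᵏ` of nonincreasing nonnegative vectors with coordinate sum at most `1`. -/
def simplexSet (k : ℕ) : Set (Fin k → ℝ) :=
  {x | (∀ i j : Fin k, i ≤ j → x j ≤ x i) ∧ (∀ i, 0 ≤ x i) ∧ ∑ i, x i ≤ 1}

/-- The polytope `P_{u,v}(ℰ)`. -/
def Puv (u v : ℝ) {k : ℕ} (ℰ : Finset (Finset (Fin k))) : Set (Fin k → ℝ) :=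
  {x | x ∈ simplexSet k ∧ ∀ E : Finset (Fin k),
    (E ∈ ℰ → v ≤ ∑ i ∈ E, x i) ∧ (E ∉ ℰ → 1 - u ≤ ∑ i ∈ Eᶜ, x i)}

/-!
By Mertens' first theorem, the primes `p ≤ x`, weighted by `log p / (p log x)`, make the ratios
`log p / log x` equidistributed on `[0, 1]`. Given the `k` largest prime factors `pᵢ = x ^ tᵢ` of an
integer `n ≤ x`, the cofactor is any integer up to `x ^ (1 - ∑ tᵢ)` without prime factors above
`x ^ s`, where `s` is the smallest `tᵢ`. So if smooth numbers have the Dickman densities, summing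
over the `pᵢ` by a continuous mapping theorem with varying maps shows that the density of the `n`
with `t` in a region `R` bounded away from the coordinate hyperplanes is
`∫_R ρ((1 - ∑ tᵢ) / s) / ∏ tᵢ`. For `k = 1` and `R = (1 / w, 1]` this expresses the density of the
`x ^ (1 / w)`-smooth numbers through those with parameter smaller than `w - 1`, and proves by
induction that it is `ρ w`. Since `ρ w → 0`, few integers have fewer than `k` prime factors
`≥ x ^ ε` when `ε` is small, so `R` may be any region.

Every prime factor of the cofactor is at most `n ^ (1 / (k + 1))`, hence less than `x ^ (v - u)` for
`k = ⌊1 / (v - u)⌋`. Multiplying a divisor by such primes one at a time cannot jump across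
`(x ^ u, x ^ v)`. Hence, up to `o(x)` exceptions, `n` has no divisor in this interval if and only if
every `E` satisfies `∑_{i ∈ E} tᵢ ≥ v` or `∑_{i ∉ E} tᵢ ≥ 1 - u`, that is, if `t` lies in the
disjoint union of the polytopes `Puv u v ℰ`.
-/

open Set Topology ArithmeticFunction.vonMangoldt

theorem sum_vonMangoldt_mul_div (N : ℕ) :
    ∑ n ∈ Finset.Ioc 0 N, Λ n * ((N / n : ℕ) : ℝ) = Real.log N.factorial := by
  have sum_eq (M : ℕ) := ArithmeticFunction.sum_Ioc_mul_zeta_eq_sum (R := ℝ) Λ M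
  rw [← sum_eq, ArithmeticFunction.vonMangoldt_mul_zeta]
  induction N with
  | zero => simp
  | succ n ih =>
    rw [Finset.sum_Ioc_succ_top (Nat.zero_le n), ih, Nat.factorial_succ, Nat.cast_mul,
      Real.log_mul (by positivity) (by positivity), ArithmeticFunction.log_apply, add_comm]

theorem mul_log_sub_le_log_factorial (N : ℕ) :
    N * Real.log N - N ≤ Real.log N.factorial := by
  rcases eq_or_ne N 0 with rfl | hN
  · simp
  have log_nonneg := Real.log_natCast_nonneg N
  have log_two_pi_nonneg : 0 ≤ Real.log (2 * Real.pi) :=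
    Real.log_nonneg (by linarith [Real.pi_gt_three])
  linarith [Stirling.le_log_factorial_stirling hN]

theorem log_factorial_le_mul_log (N : ℕ) : Real.log N.factorial ≤ N * Real.log N := by
  rw [← Real.log_pow]
  exact Real.log_le_log (by positivity) (mod_cast Nat.factorial_le_pow N)

theorem log_factorial_le_mul_sum_vonMangoldt_div (N : ℕ) :
    Real.log N.factorial ≤ N * ∑ n ∈ Finset.Ioc 0 N, Λ n / n := by
  rw [← sum_vonMangoldt_mul_div, Finset.mul_sum]
  refine Finset.sum_le_sum fun n _ => ?_
  calc Λ n * ((N / n : ℕ) : ℝ) ≤ Λ n * ((N : ℝ) / n) :=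
        mul_le_mul_of_nonneg_left Nat.cast_div_le ArithmeticFunction.vonMangoldt_nonneg
    _ = N * (Λ n / n) := by ring

theorem mul_sum_vonMangoldt_div_sub_psi_le_log_factorial (N : ℕ) :
    N * ∑ n ∈ Finset.Ioc 0 N, Λ n / n - Chebyshev.psi N ≤ Real.log N.factorial := by
  have psi_eq : Chebyshev.psi N = ∑ n ∈ Finset.Ioc 0 N, Λ n := by simp [Chebyshev.psi]
  rw [← sum_vonMangoldt_mul_div, Finset.mul_sum, psi_eq, ← Finset.sum_sub_distrib]
  refine Finset.sum_le_sum fun n _ => ?_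
  have div_sub_one_le : (N : ℝ) / n - 1 ≤ ((N / n : ℕ) : ℝ) := by
    rw [← Nat.floor_div_eq_div (K := ℝ)]
    linarith [Nat.lt_floor_add_one ((N : ℝ) / n)]
  calc N * (Λ n / n) - Λ n = Λ n * ((N : ℝ) / n - 1) := by ring
    _ ≤ Λ n * ((N / n : ℕ) : ℝ) :=
      mul_le_mul_of_nonneg_left div_sub_one_le ArithmeticFunction.vonMangoldt_nonneg

theorem abs_sum_vonMangoldt_div_sub_log_le {N : ℕ} (hN : N ≠ 0) :
    |∑ n ∈ Finset.Ioc 0 N, Λ n / n - Real.log N| ≤ Real.log 4 + 4 := by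
  have N_pos : (0 : ℝ) < N := by positivity
  have log_four_nonneg : 0 ≤ Real.log 4 := Real.log_nonneg (by norm_num)
  rw [abs_le]
  constructor
  · have : N * (Real.log N - 1) ≤ N * ∑ n ∈ Finset.Ioc 0 N, Λ n / n := by
      linarith [mul_log_sub_le_log_factorial N, log_factorial_le_mul_sum_vonMangoldt_div N]
    linarith [le_of_mul_le_mul_left this N_pos]
  · have : N * ∑ n ∈ Finset.Ioc 0 N, Λ n / n ≤ N * (Real.log N + (Real.log 4 + 4)) := by
      linarith [log_factorial_le_mul_log N, mul_sum_vonMangoldt_div_sub_psi_le_log_factorial N,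
        Chebyshev.psi_le_const_mul_self N_pos.le]
    linarith [le_of_mul_le_mul_left this N_pos]

theorem summable_vonMangoldt_div_of_not_prime :
    Summable fun n : ℕ => (if n.Prime then 0 else Λ n) / n := by
  have residueClass_eq (n : ℕ) : ArithmeticFunction.vonMangoldt.residueClass (0 : ZMod 1) n = Λ n :=
    indicator_of_mem (s := {n : ℕ | (n : ZMod 1) = 0}) (Subsingleton.elim _ _) _
  simpa only [residueClass_eq] using
    ArithmeticFunction.vonMangoldt.summable_residueClass_non_primes_div (q := 1) 0

theorem exists_abs_sum_primesLE_log_div_sub_log_le :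
    ∃ C : ℝ, ∀ N : ℕ, N ≠ 0 → |∑ p ∈ N.primesLE, Real.log p / p - Real.log N| ≤ C := by
  set g : ℕ → ℝ := fun n => (if n.Prime then 0 else Λ n) / n with hg
  have g_nonneg (n : ℕ) : 0 ≤ g n := by
    refine div_nonneg ?_ n.cast_nonneg
    split_ifs
    exacts [le_rfl, ArithmeticFunction.vonMangoldt_nonneg]
  refine ⟨Real.log 4 + 4 + ∑' n, g n, fun N hN => ?_⟩
  have sum_split : ∑ n ∈ Finset.Ioc 0 N, Λ n / n
      = ∑ p ∈ N.primesLE, Real.log p / p + ∑ n ∈ Finset.Ioc 0 N, g n := by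
    rw [Nat.primesLE_eq_filter_Ioc_zero, Finset.sum_filter, ← Finset.sum_add_distrib]
    refine Finset.sum_congr rfl fun n _ => ?_
    by_cases hn : n.Prime <;> simp [hg, hn, ArithmeticFunction.vonMangoldt_apply_prime]
  have bound := abs_le.1 (abs_sum_vonMangoldt_div_sub_log_le hN)
  have sum_g_nonneg := Finset.sum_nonneg fun n (_ : n ∈ Finset.Ioc 0 N) => g_nonneg n
  have sum_g_le := summable_vonMangoldt_div_of_not_prime.sum_le_tsum (Finset.Ioc 0 N)
    fun n _ => g_nonneg n
  rw [sum_split] at bound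
  rw [abs_le]
  constructor <;> linarith [bound.1, bound.2]

theorem tendsto_sum_primesLE_log_div_div_log :
    Tendsto (fun x : ℝ => (∑ p ∈ ⌊x⌋₊.primesLE, Real.log p / p) / Real.log x) atTop (𝓝 1) := by
  obtain ⟨C, hC⟩ := exists_abs_sum_primesLE_log_div_sub_log_le
  have floor_isEquivalent :
      Asymptotics.IsEquivalent atTop (fun x : ℝ => Real.log ⌊x⌋₊) fun x => Real.log x :=
    Asymptotics.isEquivalent_nat_floor.log tendsto_id
  have sum_isEquivalent : Asymptotics.IsEquivalent atTop
      (fun x : ℝ => ∑ p ∈ ⌊x⌋₊.primesLE, Real.log p / p) fun x => Real.log ⌊x⌋₊ := by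
    refine Asymptotics.IsBigO.trans_isLittleO (g := fun _ => (1 : ℝ)) ?_ ?_
    · refine Asymptotics.IsBigO.of_bound C ?_
      filter_upwards [eventually_ge_atTop 1] with x hx
      simpa using hC _ (Nat.floor_pos.2 hx).ne'
    · exact (Asymptotics.isLittleO_const_left.2 <| .inr <| tendsto_norm_atTop_atTop.comp <|
        Real.tendsto_log_atTop.comp <| tendsto_natCast_atTop_atTop.comp tendsto_nat_floor_atTop)
  refine (Asymptotics.isEquivalent_iff_tendsto_one ?_).1 (sum_isEquivalent.trans floor_isEquivalent)
  filter_upwards [eventually_gt_atTop 1] with x hx using (Real.log_pos hx).ne'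

section ExtendedContinuousMapping

variable {ι Ω Ω' : Type*} {L : Filter ι} [TopologicalSpace Ω] [TopologicalSpace Ω']

theorem iInter_closure_iUnion_preimage_subset {F : ι → Ω → Ω'} {s : ℕ → Set ι}
    (hs : L.HasAntitoneBasis s) {C : Set Ω'} (hC : IsClosed C) {t : Ω} {y : Ω'}
    (hF : Tendsto (Function.uncurry F) (L ×ˢ 𝓝 t) (𝓝 y))
    (ht : t ∈ ⋂ n, closure (⋃ i ∈ s n, F i ⁻¹' C)) : y ∈ C := by
  by_contra hy
  obtain ⟨⟨n, U⟩, ⟨-, hU⟩, hnU⟩ := (hs.1.prod (nhds_basis_opens t)).mem_iff.1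
    (hF (hC.isOpen_compl.mem_nhds hy))
  obtain ⟨t', ht'U, ht'⟩ := mem_closure_iff.1 (mem_iInter.1 ht n) U hU.2 hU.1
  obtain ⟨i, hi, ht'C⟩ := mem_iUnion₂.1 ht'
  exact hnU (mk_mem_prod hi ht'U) ht'C

variable [MeasurableSpace Ω] [OpensMeasurableSpace Ω] [HasOuterApproxClosed Ω]
  [L.IsCountablyGenerated] {μs : ι → ProbabilityMeasure Ω} {μ : ProbabilityMeasure Ω}

theorem limsup_measure_preimage_le_of_tendsto_uncurry (hμ : Tendsto μs L (𝓝 μ))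
    {F : ι → Ω → Ω'} {f : Ω → Ω'}
    (hF : ∀ᵐ t ∂(μ : Measure Ω), Tendsto (Function.uncurry F) (L ×ˢ 𝓝 t) (𝓝 (f t)))
    {C : Set Ω'} (hC : IsClosed C) :
    limsup (fun i => (μs i : Measure Ω) (F i ⁻¹' C)) L ≤ (μ : Measure Ω) (f ⁻¹' C) := by
  obtain ⟨s, hs⟩ := L.exists_antitone_basis
  set K : ℕ → Set Ω := fun n => closure (⋃ i ∈ s n, F i ⁻¹' C)
  have K_antitone : Antitone K := fun m n hmn =>
    closure_mono (biUnion_subset_biUnion_left (hs.2 hmn))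
  have limsup_le (n : ℕ) :
      limsup (fun i => (μs i : Measure Ω) (F i ⁻¹' C)) L ≤ (μ : Measure Ω) (K n) := by
    refine (limsup_le_limsup ?_).trans
      (ProbabilityMeasure.limsup_measure_closed_le_of_tendsto hμ isClosed_closure)
    filter_upwards [hs.1.mem_of_mem (i := n) trivial] with i hi
    exact measure_mono ((subset_biUnion_of_mem (u := fun i => F i ⁻¹' C) hi).trans subset_closure)
  calc limsup (fun i => (μs i : Measure Ω) (F i ⁻¹' C)) L
      ≤ ⨅ n, (μ : Measure Ω) (K n) := le_iInf limsup_le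
    _ = (μ : Measure Ω) (⋂ n, K n) := (K_antitone.measure_iInter
        (fun n => isClosed_closure.measurableSet.nullMeasurableSet)
        ⟨0, measure_ne_top _ _⟩).symm
    _ ≤ (μ : Measure Ω) (f ⁻¹' C) := measure_mono_ae (by
        filter_upwards [hF] with t ht using iInter_closure_iUnion_preimage_subset hs hC ht)

theorem tendsto_map_of_tendsto_uncurry [MeasurableSpace Ω'] [BorelSpace Ω']
    (hμ : Tendsto μs L (𝓝 μ)) {F : ι → Ω → Ω'} {f : Ω → Ω'}
    (hF_meas : ∀ i, AEMeasurable (F i) (μs i : Measure Ω))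
    (hf_meas : AEMeasurable f (μ : Measure Ω))
    (hF : ∀ᵐ t ∂(μ : Measure Ω), Tendsto (Function.uncurry F) (L ×ˢ 𝓝 t) (𝓝 (f t))) :
    Tendsto (fun i => (μs i).map (hF_meas i)) L (𝓝 (μ.map hf_meas)) := by
  refine tendsto_of_forall_isClosed_limsup_le' fun C hC => ?_
  simpa only [ProbabilityMeasure.toMeasure_map, Measure.map_apply_of_aemeasurable (hF_meas _)
      hC.measurableSet, Measure.map_apply_of_aemeasurable hf_meas hC.measurableSet] using
    limsup_measure_preimage_le_of_tendsto_uncurry hμ hF hC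

theorem tendsto_integral_of_tendsto_uncurry (hμ : Tendsto μs L (𝓝 μ))
    {F : ι → Ω → ℝ} {f : Ω → ℝ} {B : ℝ}
    (hF_meas : ∀ i, AEMeasurable (F i) (μs i : Measure Ω))
    (hf_meas : AEMeasurable f (μ : Measure Ω)) (hF_bound : ∀ᶠ i in L, ∀ t, |F i t| ≤ B)
    (hf_bound : ∀ t, |f t| ≤ B)
    (hF : ∀ᵐ t ∂(μ : Measure Ω), Tendsto (Function.uncurry F) (L ×ˢ 𝓝 t) (𝓝 (f t))) :
    Tendsto (fun i => ∫ t, F i t ∂(μs i : Measure Ω)) L (𝓝 (∫ t, f t ∂(μ : Measure Ω))) := by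
  let clamp : BoundedContinuousFunction ℝ ℝ :=
    .ofNormedAddCommGroup (fun y => max (-|B|) (min y |B|)) (by fun_prop) |B| fun y => by
      rw [Real.norm_eq_abs, abs_le]
      exact ⟨le_max_left _ _, max_le (neg_le_self (abs_nonneg B)) (min_le_right _ _)⟩
  have clamp_eq {y : ℝ} (hy : |y| ≤ B) : clamp y = y := by
    have hy' := abs_le.1 (hy.trans (le_abs_self B))
    simp [clamp, hy'.1, hy'.2]
  have h := ProbabilityMeasure.tendsto_iff_forall_integral_tendsto.1
    (tendsto_map_of_tendsto_uncurry hμ hF_meas hf_meas hF) clamp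
  simp only [ProbabilityMeasure.toMeasure_map] at h
  rw [integral_map hf_meas clamp.continuous.aestronglyMeasurable] at h
  simp only [clamp_eq (hf_bound _)] at h
  refine h.congr' ?_
  filter_upwards [hF_bound] with i hi
  rw [integral_map (hF_meas i) clamp.continuous.aestronglyMeasurable]
  simp only [clamp_eq (hi _)]

end ExtendedContinuousMapping

section PrimeLogs

theorem filter_logb_le_primesLE {x a : ℝ} (hx : 1 < x) (ha : a ≤ 1) :
    ⌊x⌋₊.primesLE.filter (fun p : ℕ => Real.logb x p ≤ a) = ⌊x ^ a⌋₊.primesLE := by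
  ext p
  have x_pos : 0 < x := one_pos.trans hx
  simp only [Finset.mem_filter, Nat.mem_primesLE, Nat.le_floor_iff x_pos.le,
    Nat.le_floor_iff (Real.rpow_nonneg x_pos.le a)]
  refine ⟨fun ⟨⟨_, hp⟩, h⟩ =>
    ⟨(Real.logb_le_iff_le_rpow hx (mod_cast hp.pos)).1 h, hp⟩, fun ⟨h, hp⟩ => ⟨⟨?_, hp⟩,
      (Real.logb_le_iff_le_rpow hx (mod_cast hp.pos)).2 h⟩⟩
  simpa using h.trans (Real.rpow_le_rpow_of_exponent_le hx.le ha)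

theorem tendsto_sum_logb_div_of_logb_le {a : ℝ} (ha₀ : 0 ≤ a) (ha₁ : a ≤ 1) :
    Tendsto (fun x : ℝ => ∑ p ∈ ⌊x⌋₊.primesLE.filter (fun p : ℕ => Real.logb x p ≤ a),
      Real.logb x p / p) atTop (𝓝 a) := by
  rcases ha₀.eq_or_lt with rfl | ha
  · refine tendsto_const_nhds.congr' ?_
    filter_upwards [eventually_gt_atTop 1] with x hx
    simp [filter_logb_le_primesLE hx ha₁]
  · have h := (tendsto_sum_primesLE_log_div_div_log.comp (tendsto_rpow_atTop ha)).const_mul a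
    rw [mul_one] at h
    refine h.congr' ?_
    filter_upwards [eventually_gt_atTop 1] with x hx
    have log_pos : 0 < Real.log x := Real.log_pos hx
    rw [filter_logb_le_primesLE hx ha₁, Function.comp_apply, Real.log_rpow (one_pos.trans hx),
      Finset.sum_div, Finset.mul_sum]
    refine Finset.sum_congr rfl fun p _ => ?_
    rw [Real.logb]
    field_simp

instance isFiniteMeasure_sum_smul_dirac {α Ω : Type*} [MeasurableSpace Ω] (s : Finset α)
    (w : α → NNReal) (g : α → Ω) : IsFiniteMeasure (∑ a ∈ s, w a • Measure.dirac (g a)) where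
  measure_univ_lt_top := by
    rw [Measure.finsetSum_apply]
    exact ENNReal.sum_lt_top.2 fun a _ => measure_lt_top (w a • Measure.dirac (g a)) univ

/-- The measure `∑_{p ≤ x} (log p / (p log x)) δ_{log p / log x}`, which records the sizes of the
primes up to `x` on the logarithmic scale. -/
noncomputable def primeLogMeasure (x : ℝ) : Measure ℝ :=
  ∑ p ∈ ⌊x⌋₊.primesLE, (Real.logb x p / p).toNNReal • Measure.dirac (Real.logb x p)

instance (x : ℝ) : IsFiniteMeasure (primeLogMeasure x) :=
  isFiniteMeasure_sum_smul_dirac _ _ _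

theorem logb_div_natCast_nonneg {x : ℝ} (hx : 1 < x) (p : ℕ) : 0 ≤ Real.logb x p / p :=
  div_nonneg (div_nonneg (Real.log_natCast_nonneg p) (Real.log_nonneg hx.le)) p.cast_nonneg

theorem primeLogMeasure_real_apply {x : ℝ} (hx : 1 < x) (s : Set ℝ) [DecidablePred (· ∈ s)] :
    (primeLogMeasure x).real s =
      ∑ p ∈ ⌊x⌋₊.primesLE.filter (fun p : ℕ => Real.logb x p ∈ s), Real.logb x p / p := by
  rw [primeLogMeasure, Measure.real, Measure.finsetSum_apply, Finset.sum_filter,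
    ENNReal.toReal_sum fun p _ => measure_ne_top _ _]
  refine Finset.sum_congr rfl fun p _ => ?_
  rw [Measure.smul_apply, ENNReal.smul_def, smul_eq_mul, ENNReal.toReal_mul, ENNReal.coe_toReal,
    Real.coe_toNNReal _ (logb_div_natCast_nonneg hx p)]
  by_cases h : Real.logb x p ∈ s <;> simp [h]

theorem logb_le_one_of_mem_primesLE {x : ℝ} (hx : 1 < x) {p : ℕ} (hp : p ∈ ⌊x⌋₊.primesLE) :
    Real.logb x p ≤ 1 := by
  have h := (Nat.le_floor_iff (one_pos.trans hx).le).1 (Nat.le_of_mem_primesLE hp)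
  rwa [Real.logb_le_iff_le_rpow hx (mod_cast (Nat.prime_of_mem_primesLE hp).pos), Real.rpow_one]

theorem tendsto_primeLogMeasure_real_Iic (a : ℝ) :
    Tendsto (fun x => (primeLogMeasure x).real (Iic a)) atTop (𝓝 (max (min a 1) 0)) := by
  rcases lt_or_ge a 0 with ha | ha
  · rw [max_eq_right (min_le_of_left_le ha.le)]
    refine tendsto_const_nhds.congr' ?_
    filter_upwards [eventually_gt_atTop 1] with x hx
    rw [primeLogMeasure_real_apply hx, Finset.filter_false_of_mem, Finset.sum_empty]
    exact fun p _ => notMem_Iic.2 (ha.trans_le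
      (div_nonneg (Real.log_natCast_nonneg p) (Real.log_nonneg hx.le)))
  · rw [max_eq_left (le_min ha zero_le_one)]
    refine (tendsto_sum_logb_div_of_logb_le (le_min ha zero_le_one) (min_le_right a 1)).congr' ?_
    filter_upwards [eventually_gt_atTop 1] with x hx
    rw [primeLogMeasure_real_apply hx]
    refine Finset.sum_congr (Finset.filter_congr fun p hp => ?_) fun _ _ => rfl
    simp [logb_le_one_of_mem_primesLE hx hp]

theorem tendsto_primeLogMeasure_real_univ :
    Tendsto (fun x => (primeLogMeasure x).real univ) atTop (𝓝 1) := by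
  have h := tendsto_primeLogMeasure_real_Iic 1
  simp only [min_self, zero_le_one, max_eq_left] at h
  refine h.congr' ?_
  filter_upwards [eventually_gt_atTop 1] with x hx
  rw [primeLogMeasure_real_apply hx, primeLogMeasure_real_apply hx]
  refine Finset.sum_congr (Finset.filter_congr fun p hp => ?_) fun _ _ => rfl
  simp [logb_le_one_of_mem_primesLE hx hp]

theorem tendsto_probabilityMeasure_of_tendsto_real_Iic {ι : Type*} {L : Filter ι}
    [L.IsCountablyGenerated] {μs : ι → ProbabilityMeasure ℝ} {μ : ProbabilityMeasure ℝ}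
    (h : ∀ a, Tendsto (fun i => (μs i : Measure ℝ).real (Iic a)) L
      (𝓝 ((μ : Measure ℝ).real (Iic a)))) :
    Tendsto μs L (𝓝 μ) := by
  have real_Ioc (ν : ProbabilityMeasure ℝ) {a b : ℝ} (hab : a < b) :
      (ν (Ioc a b) : ℝ) = (ν : Measure ℝ).real (Iic b) - (ν : Measure ℝ).real (Iic a) := by
    rw [← measureReal_sdiff (Iic_subset_Iic.2 hab.le) measurableSet_Iic, Iic_sdiff_Iic]
    rfl
  refine (isPiSystem_Ioc id id).tendsto_probabilityMeasure_of_tendsto_of_mem ?_ ?_ ?_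
  · rintro _ ⟨a, b, -, rfl⟩
    exact measurableSet_Ioc
  · intro U hU t ht
    obtain ⟨ε, hε, hεU⟩ := Metric.isOpen_iff.1 hU t ht
    refine ⟨Ioc (t - ε / 2) (t + ε / 2), ⟨_, _, by simp only [id]; linarith, rfl⟩,
      Ioc_mem_nhds (by linarith) (by linarith), fun r hr => hεU ?_⟩
    rw [Metric.mem_ball, Real.dist_eq, abs_lt]
    constructor <;> linarith [hr.1, hr.2]
  · rintro _ ⟨a, b, hab, rfl⟩
    have hab' : a < b := hab
    simpa only [← NNReal.tendsto_coe, id, real_Ioc _ hab'] using (h b).sub (h a)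

instance : IsProbabilityMeasure (volume.restrict (Ioc (0 : ℝ) 1)) where
  measure_univ := by simp

/-- The uniform distribution on the unit interval, the limit law of `primeLogMeasure`. -/
noncomputable def unitIntervalLaw : ProbabilityMeasure ℝ :=
  ⟨volume.restrict (Ioc 0 1), inferInstance⟩

/-- The probability measure proportional to `primeLogMeasure x`. -/
noncomputable def primeLogLaw (x : ℝ) : ProbabilityMeasure ℝ :=
  FiniteMeasure.normalize ⟨primeLogMeasure x, inferInstance⟩

theorem primeLogMeasure_eq_smul (x : ℝ) :
    primeLogMeasure x = primeLogMeasure x univ • (primeLogLaw x : Measure ℝ) := by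
  let μ : FiniteMeasure ℝ := ⟨primeLogMeasure x, inferInstance⟩
  have mass_eq : (μ.mass : ENNReal) = primeLogMeasure x univ := μ.ennreal_mass
  rw [← mass_eq]
  exact congr_arg FiniteMeasure.toMeasure μ.self_eq_mass_smul_normalize

theorem tendsto_primeLogLaw : Tendsto primeLogLaw atTop (𝓝 unitIntervalLaw) := by
  refine tendsto_probabilityMeasure_of_tendsto_real_Iic fun a => ?_
  have limit_eq : (unitIntervalLaw : Measure ℝ).real (Iic a) = max (min a 1) 0 := by
    change (volume.restrict (Ioc (0 : ℝ) 1)).real (Iic a) = _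
    rw [measureReal_restrict_apply measurableSet_Iic, inter_comm, Ioc_inter_Iic,
      Real.volume_real_Ioc, sub_zero, inf_comm]
  rw [limit_eq]
  have h := (tendsto_primeLogMeasure_real_Iic a).div tendsto_primeLogMeasure_real_univ one_ne_zero
  rw [div_one] at h
  refine h.congr' ?_
  filter_upwards [tendsto_primeLogMeasure_real_univ.eventually_ne one_ne_zero] with x hx
  rw [Pi.div_apply, div_eq_iff hx, mul_comm]
  conv_lhs => rw [primeLogMeasure_eq_smul x]
  exact measureReal_ennreal_smul_apply _

theorem pi_sum_smul_dirac {ι α Ω : Type*} [Fintype ι] [DecidableEq ι] [MeasurableSpace Ω]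
    (s : Finset α) (w : α → NNReal) (g : α → Ω) :
    Measure.pi (fun _ : ι => ∑ a ∈ s, w a • Measure.dirac (g a)) =
      ∑ p ∈ Fintype.piFinset fun _ : ι => s,
        (∏ i, w (p i)) • Measure.dirac fun i => g (p i) := by
  refine Measure.pi_eq fun A hA => ?_
  simp only [Measure.finsetSum_apply, Measure.smul_apply, Finset.prod_univ_sum,
    Measure.dirac_apply' _ (MeasurableSet.univ_pi hA), Measure.dirac_apply' _ (hA _)]
  refine Finset.sum_congr rfl fun p _ => ?_
  simp only [ENNReal.smul_def, smul_eq_mul, ENNReal.ofNNReal_finsetProd, Finset.prod_mul_distrib]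
  congr 1
  by_cases h : ∀ i, g (p i) ∈ A i
  · simp [h]
  · obtain ⟨i, hi⟩ := not_forall.1 h
    rw [Finset.prod_eq_zero (Finset.mem_univ i) (indicator_of_notMem hi _),
      indicator_of_notMem fun hp : _ ∈ univ.pi A => hi (hp i trivial)]

theorem pi_primeLogMeasure_eq_smul {ι : Type*} [Fintype ι] (x : ℝ) :
    Measure.pi (fun _ : ι => primeLogMeasure x) =
      (primeLogMeasure x univ ^ Fintype.card ι) •
        (ProbabilityMeasure.pi fun _ : ι => primeLogLaw x : Measure (ι → ℝ)) := by
  refine Measure.pi_eq fun A _ => ?_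
  rw [Measure.smul_apply, ProbabilityMeasure.toMeasure_pi, Measure.pi_pi, smul_eq_mul]
  conv_rhs =>
    enter [2, i]
    rw [primeLogMeasure_eq_smul, Measure.smul_apply, smul_eq_mul]
  rw [Finset.prod_mul_distrib, Finset.prod_const, Finset.card_univ]

theorem integral_pi_primeLogMeasure {ι : Type*} [Fintype ι] [DecidableEq ι] {x : ℝ} (hx : 1 < x)
    (F : (ι → ℝ) → ℝ) :
    ∫ t, F t ∂Measure.pi (fun _ : ι => primeLogMeasure x) =
      ∑ p ∈ Fintype.piFinset fun _ : ι => ⌊x⌋₊.primesLE,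
        (∏ i, Real.logb x (p i) / p i) * F fun i => Real.logb x (p i) := by
  have h := pi_sum_smul_dirac (ι := ι) ⌊x⌋₊.primesLE (fun p => (Real.logb x p / p).toNNReal)
    fun p => Real.logb x p
  simp only [primeLogMeasure]
  rw [h, integral_finsetSum_measure]
  · refine Finset.sum_congr rfl fun p _ => ?_
    rw [integral_smul_nnreal_measure, integral_dirac, NNReal.smul_def, NNReal.coe_prod, smul_eq_mul]
    simp only [Real.coe_toNNReal _ (logb_div_natCast_nonneg hx _)]
  · exact fun p _ => (integrable_dirac (by simp)).smul_measure_nnreal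

/-- The half-open unit cube `(0, 1]^ι`. -/
def unitCube (ι : Type*) : Set (ι → ℝ) := univ.pi fun _ => Ioc 0 1

theorem tendsto_sum_piFinset_primesLE {ι : Type*} [Fintype ι] [DecidableEq ι]
    {F : ℝ → (ι → ℝ) → ℝ} {f : (ι → ℝ) → ℝ} {B : ℝ}
    (hF_meas : ∀ x, Measurable (F x)) (hf_meas : Measurable f)
    (hF_bound : ∀ᶠ x in atTop, ∀ t, |F x t| ≤ B) (hf_bound : ∀ t, |f t| ≤ B)
    (hF : ∀ᵐ t ∂volume.restrict (unitCube ι),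
      Tendsto (Function.uncurry F) (atTop ×ˢ 𝓝 t) (𝓝 (f t))) :
    Tendsto (fun x : ℝ => ∑ p ∈ Fintype.piFinset fun _ : ι => ⌊x⌋₊.primesLE,
        (∏ i, Real.logb x (p i) / p i) * F x fun i => Real.logb x (p i)) atTop
      (𝓝 (∫ t in unitCube ι, f t)) := by
  have limit_law : (ProbabilityMeasure.pi fun _ : ι => unitIntervalLaw : Measure (ι → ℝ)) =
      volume.restrict (unitCube ι) := (Measure.restrict_pi_pi _ _).symm
  have law_tendsto := (ProbabilityMeasure.continuous_pi.tendsto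
    fun _ : ι => unitIntervalLaw).comp (tendsto_pi_nhds.2 fun _ => tendsto_primeLogLaw)
  rw [← limit_law] at hF ⊢
  have h := (tendsto_primeLogMeasure_real_univ.pow (Fintype.card ι)).mul
    (tendsto_integral_of_tendsto_uncurry law_tendsto (fun x => (hF_meas x).aemeasurable)
      hf_meas.aemeasurable hF_bound hf_bound hF)
  rw [one_pow, one_mul] at h
  refine h.congr' ?_
  filter_upwards [eventually_gt_atTop 1] with x hx
  rw [← integral_pi_primeLogMeasure hx, pi_primeLogMeasure_eq_smul, integral_smul_measure,
    ENNReal.toReal_pow, smul_eq_mul]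
  rfl

end PrimeLogs

section SmoothCount

/-- The counting function `Ψ(x, z)` of the positive integers up to `x` all of whose prime factors
are at most `z`. -/
noncomputable def smoothCount (x z : ℝ) : ℕ := (Nat.smoothNumbersUpTo ⌊x⌋₊ (⌊z⌋₊ + 1)).card

theorem mem_smoothNumbersUpTo_floor {x z : ℝ} (hx : 0 ≤ x) (hz : 0 ≤ z) {m : ℕ} :
    m ∈ Nat.smoothNumbersUpTo ⌊x⌋₊ (⌊z⌋₊ + 1) ↔
      m ≠ 0 ∧ (m : ℝ) ≤ x ∧ ∀ q : ℕ, q.Prime → q ∣ m → (q : ℝ) ≤ z := by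
  simp only [Nat.mem_smoothNumbersUpTo, Nat.mem_smoothNumbers, Nat.lt_succ_iff, Nat.le_floor_iff hx,
    Nat.le_floor_iff hz]
  refine ⟨fun ⟨hmx, hm, h⟩ => ⟨hm, hmx, fun q hq hqm => h q ?_⟩,
    fun ⟨hm, hmx, h⟩ => ⟨hmx, hm, fun q hq => ?_⟩⟩
  · exact (Nat.mem_primeFactorsList hm).2 ⟨hq, hqm⟩
  · obtain ⟨hq, hqm⟩ := (Nat.mem_primeFactorsList hm).1 hq
    exact h q hq hqm

theorem smoothCount_mono_right (x : ℝ) : Monotone (smoothCount x) := fun y z hyz => by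
  refine Finset.card_le_card fun m hm => ?_
  rw [Nat.mem_smoothNumbersUpTo] at hm ⊢
  exact ⟨hm.1, Nat.smoothNumbers_mono (Nat.succ_le_succ (Nat.floor_le_floor hyz)) hm.2⟩

theorem smoothCount_le_floor (x z : ℝ) : smoothCount x z ≤ ⌊x⌋₊ :=
  (Nat.le_add_right _ _).trans_eq
    (Nat.smoothNumbersUpTo_card_add_roughNumbersUpTo_card ⌊x⌋₊ (⌊z⌋₊ + 1))

theorem smoothCount_le {x : ℝ} (hx : 0 ≤ x) (z : ℝ) : (smoothCount x z : ℝ) ≤ x :=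
  (Nat.cast_le.2 (smoothCount_le_floor x z)).trans (Nat.floor_le hx)

theorem smoothCount_eq_floor {x z : ℝ} (hxz : x ≤ z) : smoothCount x z = ⌊x⌋₊ := by
  have smooth_eq : Nat.smoothNumbersUpTo ⌊x⌋₊ (⌊z⌋₊ + 1) = Finset.Ioc 0 ⌊x⌋₊ := by
    ext m
    rw [Nat.mem_smoothNumbersUpTo, Finset.mem_Ioc, and_comm]
    refine and_congr_left_iff.2 fun hm => ⟨fun h => Nat.pos_of_ne_zero h.1, fun h => ?_⟩
    exact Nat.mem_smoothNumbers_of_lt h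
      (Nat.lt_succ_of_le (hm.trans (Nat.floor_le_floor hxz)))
  rw [smoothCount, smooth_eq, Nat.card_Ioc, Nat.sub_zero]

theorem measurable_smoothCount : Measurable fun q : ℝ × ℝ => (smoothCount q.1 q.2 : ℝ) := by
  have floors_meas : Measurable fun q : ℝ × ℝ => (⌊q.1⌋₊, ⌊q.2⌋₊) :=
    (Nat.measurable_floor.comp measurable_fst).prodMk (Nat.measurable_floor.comp measurable_snd)
  have card_meas : Measurable fun c : ℕ × ℕ => ((Nat.smoothNumbersUpTo c.1 (c.2 + 1)).card : ℝ) :=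
    measurable_of_countable _
  simpa only [smoothCount, Function.comp_def] using card_meas.comp floors_meas

end SmoothCount

section BoundedNat

theorem finite_setOf_natCast_le (x : ℝ) : {n : ℕ | (n : ℝ) ≤ x}.Finite :=
  (finite_Iic ⌊x⌋₊).subset fun _ hn => Nat.le_floor hn

theorem ncard_le_of_forall_mem {x : ℝ} {S : Set ℕ} (hx : 0 ≤ x)
    (hS : ∀ n ∈ S, n ≠ 0 ∧ (n : ℝ) ≤ x) :
    (S.ncard : ℝ) ≤ x := by
  have ncard_le : S.ncard ≤ (Finset.Ioc 0 ⌊x⌋₊ : Set ℕ).ncard :=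
    ncard_le_ncard (fun n hn => Finset.mem_coe.2 <| Finset.mem_Ioc.2
      ⟨Nat.pos_of_ne_zero (hS n hn).1, Nat.le_floor (hS n hn).2⟩) (Finset.finite_toSet _)
  rw [ncard_coe_finset, Nat.card_Ioc, Nat.sub_zero] at ncard_le
  exact (Nat.cast_le.2 ncard_le).trans (Nat.floor_le hx)

end BoundedNat

section TopFactorization

variable {k : ℕ}

/-- `n = p₀ ⋯ p_{k-1} m` where `p₀ ≥ p₁ ≥ ⋯` are the `k` largest prime factors of `n`, counted with
multiplicity. -/
structure IsTopFactorization (n : ℕ) (p : Fin k → ℕ) (m : ℕ) : Prop where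
  prime : ∀ i, (p i).Prime
  antitone : Antitone p
  le_of_prime_dvd : ∀ i, ∀ q : ℕ, q.Prime → q ∣ m → q ≤ p i
  cofactor_ne_zero : m ≠ 0
  eq_prod_mul : n = (∏ i, p i) * m

theorem isTopFactorization_zero {n : ℕ} (hn : n ≠ 0) (p : Fin 0 → ℕ) :
    IsTopFactorization n p n where
  prime := fun i => i.elim0
  antitone := fun i => i.elim0
  le_of_prime_dvd := fun i => i.elim0
  cofactor_ne_zero := hn
  eq_prod_mul := by simp

namespace IsTopFactorization

variable {n m m' : ℕ} {p p' : Fin k → ℕ}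

theorem prod_pos (h : IsTopFactorization n p m) : 0 < ∏ i, p i :=
  Finset.prod_pos fun i _ => (h.prime i).pos

theorem pos (h : IsTopFactorization n p m) : 0 < n :=
  h.eq_prod_mul ▸ Nat.mul_pos h.prod_pos (Nat.pos_of_ne_zero h.cofactor_ne_zero)

theorem dvd (h : IsTopFactorization n p m) (i : Fin k) : p i ∣ n :=
  h.eq_prod_mul ▸ (Finset.dvd_prod_of_mem p (Finset.mem_univ i)).mul_right m

theorem ofFn_append_reverse_primeFactorsList (h : IsTopFactorization n p m) :
    List.ofFn p ++ m.primeFactorsList.reverse = n.primeFactorsList.reverse := by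
  refine List.Perm.eq_of_sortedGE ?_ (Nat.primeFactorsList_sorted n).reverse ?_
  · rw [List.sortedGE_iff_pairwise, List.pairwise_append]
    refine ⟨h.antitone.sortedGE_ofFn.pairwise, (Nat.primeFactorsList_sorted m).reverse.pairwise, ?_⟩
    intro a ha q hq
    obtain ⟨i, rfl⟩ := List.mem_ofFn.1 ha
    obtain ⟨hq, hqm⟩ := (Nat.mem_primeFactorsList h.cofactor_ne_zero).1 (List.mem_reverse.1 hq)
    exact h.le_of_prime_dvd i q hq hqm
  · refine (Nat.primeFactorsList_unique ?_ ?_).trans n.primeFactorsList.reverse_perm.symm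
    · rw [List.prod_append, List.prod_ofFn, List.prod_reverse,
        Nat.prod_primeFactorsList h.cofactor_ne_zero, h.eq_prod_mul]
    · intro q hq
      rcases List.mem_append.1 hq with hq | hq
      · obtain ⟨i, rfl⟩ := List.mem_ofFn.1 hq
        exact h.prime i
      · exact Nat.prime_of_mem_primeFactorsList (List.mem_reverse.1 hq)

theorem unique (h : IsTopFactorization n p m) (h' : IsTopFactorization n p' m') :
    p = p' ∧ m = m' := by
  have lists_eq := h.ofFn_append_reverse_primeFactorsList.trans
    h'.ofFn_append_reverse_primeFactorsList.symm
  obtain rfl : p = p' := List.ofFn_injective (List.append_inj lists_eq (by simp)).1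
  exact ⟨rfl, Nat.eq_of_mul_eq_mul_left h.prod_pos (h.eq_prod_mul.symm.trans h'.eq_prod_mul)⟩

theorem exists_snoc (h : IsTopFactorization n p m) (hm : m ≠ 1) :
    ∃ q m', q.Prime ∧ IsTopFactorization n (Fin.snoc p q : Fin (k + 1) → ℕ) m' ∧
      ∀ r : ℕ, r.Prime → r ∣ m → r ≤ q := by
  have hne : m.primeFactors.Nonempty :=
    Nat.nonempty_primeFactors.2 (by have := h.cofactor_ne_zero; omega)
  obtain ⟨q, hq, hq_max⟩ := m.primeFactors.exists_max_image id hne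
  obtain ⟨q_prime, ⟨m', rfl⟩, -⟩ := Nat.mem_primeFactors.1 hq
  have q_max (r : ℕ) (hr : r.Prime) (hrm : r ∣ q * m') : r ≤ q :=
    hq_max r (Nat.mem_primeFactors.2 ⟨hr, hrm, h.cofactor_ne_zero⟩)
  have q_le (i : Fin k) : q ≤ p i := h.le_of_prime_dvd i q q_prime (dvd_mul_right q m')
  refine ⟨q, m', q_prime, ⟨?_, ?_, ?_, ?_, ?_⟩, q_max⟩
  · exact Fin.lastCases (by simpa) (by simpa using h.prime)
  · intro i j
    induction j using Fin.lastCases <;> induction i using Fin.lastCases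
    · simp
    · simpa using fun _ => q_le _
    · simp [Fin.last_le_iff]
    · simpa using fun hij => h.antitone hij
  · intro i r hr hrm
    induction i using Fin.lastCases
    · simpa using q_max r hr (hrm.mul_left q)
    · simpa using h.le_of_prime_dvd _ r hr (hrm.mul_left q)
  · exact right_ne_zero_of_mul h.cofactor_ne_zero
  · rw [Fin.prod_snoc, h.eq_prod_mul, mul_assoc]

end IsTopFactorization

/-- The positive integers up to `x` whose `k` largest prime factors have logarithms to base `x` in
`R`, and whose remaining prime factors are at most `x ^ s t`, where `t` is the vector of those
logarithms. -/
def topFactorSet (x : ℝ) (R : Set (Fin k → ℝ)) (s : (Fin k → ℝ) → ℝ) : Set ℕ :=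
  {n | (n : ℝ) ≤ x ∧ ∃ p m, IsTopFactorization n p m ∧ (fun i => Real.logb x (p i)) ∈ R ∧
    ∀ q : ℕ, q.Prime → q ∣ m → (q : ℝ) ≤ x ^ s fun i => Real.logb x (p i)}

theorem finite_topFactorSet (x : ℝ) (R : Set (Fin k → ℝ)) (s : (Fin k → ℝ) → ℝ) :
    (topFactorSet x R s).Finite :=
  (finite_setOf_natCast_le x).subset fun _ hn => hn.1

theorem rpow_logb_natCast {x : ℝ} (hx : 1 < x) {p : ℕ} (hp : 0 < p) : x ^ Real.logb x p = p :=
  Real.rpow_logb (one_pos.trans hx) hx.ne' (Nat.cast_pos.2 hp)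

theorem prod_natCast_eq_rpow {ι : Type*} {x : ℝ} (hx : 1 < x) {p : ι → ℕ} (hp : ∀ i, 0 < p i)
    (E : Finset ι) : ((∏ i ∈ E, p i : ℕ) : ℝ) = x ^ ∑ i ∈ E, Real.logb x (p i) := by
  rw [Real.rpow_sum_of_pos (one_pos.trans hx), Nat.cast_prod]
  exact Finset.prod_congr rfl fun i _ => (rpow_logb_natCast hx (hp i)).symm

theorem isTopFactorization_iff {x : ℝ} (hx : 1 < x) {R : Set (Fin k → ℝ)}
    {s : (Fin k → ℝ) → ℝ} (hR : ∀ t ∈ R, Antitone t ∧ ∀ i, s t ≤ t i) {p : Fin k → ℕ} {m : ℕ}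
    (hp : (fun i => Real.logb x (p i)) ∈ R)
    (hm : ∀ q : ℕ, q.Prime → q ∣ m → (q : ℝ) ≤ x ^ s fun i => Real.logb x (p i)) :
    IsTopFactorization ((∏ i, p i) * m) p m ↔ (∀ i, (p i).Prime) ∧ m ≠ 0 := by
  refine ⟨fun h => ⟨h.prime, h.cofactor_ne_zero⟩, fun ⟨prime, hm₀⟩ => ⟨prime, ?_, ?_, hm₀, rfl⟩⟩
  · intro i j hij
    exact_mod_cast (Real.logb_le_logb hx (Nat.cast_pos.2 (prime j).pos)
      (Nat.cast_pos.2 (prime i).pos)).1 ((hR _ hp).1 hij)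
  · intro i q hq hqm
    have q_le := (hm q hq hqm).trans (Real.rpow_le_rpow_of_exponent_le hx.le ((hR _ hp).2 i))
    rw [rpow_logb_natCast hx (prime i).pos] at q_le
    exact_mod_cast q_le

open scoped Classical in
/-- The pairs `(p, m)` consisting of the `k` largest prime factors and the cofactor of an element
of `topFactorSet x R s`. -/
noncomputable def topFactorPairs (x : ℝ) (R : Set (Fin k → ℝ)) (s : (Fin k → ℝ) → ℝ) :
    Finset (Σ _ : Fin k → ℕ, ℕ) :=
  ((Fintype.piFinset fun _ : Fin k => ⌊x⌋₊.primesLE).filter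
    fun p => (fun i => Real.logb x (p i)) ∈ R).sigma fun p =>
      Nat.smoothNumbersUpTo ⌊x / ∏ i, (p i : ℝ)⌋₊ (⌊x ^ s fun i => Real.logb x (p i)⌋₊ + 1)

theorem mem_topFactorPairs {x : ℝ} (hx : 1 < x) {R : Set (Fin k → ℝ)} {s : (Fin k → ℝ) → ℝ}
    (hR : ∀ t ∈ R, Antitone t ∧ ∀ i, s t ≤ t i) {p : Fin k → ℕ} {m : ℕ} :
    ⟨p, m⟩ ∈ topFactorPairs x R s ↔
      (((∏ i, p i) * m : ℕ) : ℝ) ≤ x ∧ IsTopFactorization ((∏ i, p i) * m) p m ∧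
        (fun i => Real.logb x (p i)) ∈ R ∧
        ∀ q : ℕ, q.Prime → q ∣ m → (q : ℝ) ≤ x ^ s fun i => Real.logb x (p i) := by
  have x_pos := one_pos.trans hx
  have prod_nonneg : 0 ≤ ∏ i, (p i : ℝ) := Finset.prod_nonneg fun i _ => (p i).cast_nonneg
  classical
  rw [topFactorPairs, Finset.mem_sigma, mem_smoothNumbersUpTo_floor
    (div_nonneg x_pos.le prod_nonneg) (Real.rpow_nonneg x_pos.le _), Finset.mem_filter,
    Fintype.mem_piFinset]
  constructor
  · rintro ⟨⟨hp, hpR⟩, hm₀, hmx, hm⟩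
    have prime (i) := Nat.prime_of_mem_primesLE (hp i)
    refine ⟨?_, (isTopFactorization_iff hx hR hpR hm).2 ⟨prime, hm₀⟩, hpR, hm⟩
    rw [le_div_iff₀' (Finset.prod_pos fun i _ => Nat.cast_pos.2 (prime i).pos)] at hmx
    exact_mod_cast hmx
  · rintro ⟨hmx, h, hpR, hm⟩
    refine ⟨⟨fun i => Nat.mem_primesLE.2 ⟨?_, h.prime i⟩, hpR⟩, h.cofactor_ne_zero, ?_, hm⟩
    · exact (Nat.le_of_dvd h.pos (h.dvd i)).trans (Nat.le_floor hmx)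
    · rw [le_div_iff₀' (Finset.prod_pos fun i _ => Nat.cast_pos.2 (h.prime i).pos)]
      exact_mod_cast hmx

theorem topFactorSet_eq_image {x : ℝ} (hx : 1 < x) {R : Set (Fin k → ℝ)} {s : (Fin k → ℝ) → ℝ}
    (hR : ∀ t ∈ R, Antitone t ∧ ∀ i, s t ≤ t i) :
    topFactorSet x R s = (topFactorPairs x R s).image fun a => (∏ i, a.1 i) * a.2 := by
  ext n
  rw [Finset.coe_image]
  constructor
  · rintro ⟨hnx, p, m, h, hpm⟩
    obtain rfl := h.eq_prod_mul
    exact ⟨⟨p, m⟩, (mem_topFactorPairs hx hR).2 ⟨hnx, h, hpm⟩, rfl⟩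
  · rintro ⟨⟨p, m⟩, hpm, rfl⟩
    obtain ⟨hnx, h⟩ := (mem_topFactorPairs hx hR).1 hpm
    exact ⟨hnx, p, m, h⟩

open scoped Classical in
theorem ncard_topFactorSet {x : ℝ} (hx : 1 < x) {R : Set (Fin k → ℝ)} {s : (Fin k → ℝ) → ℝ}
    (hR : ∀ t ∈ R, Antitone t ∧ ∀ i, s t ≤ t i) :
    (topFactorSet x R s).ncard = ∑ p ∈ Fintype.piFinset fun _ : Fin k => ⌊x⌋₊.primesLE,
      if (fun i => Real.logb x (p i)) ∈ R then
        smoothCount (x / ∏ i, (p i : ℝ)) (x ^ s fun i => Real.logb x (p i)) else 0 := by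
  rw [topFactorSet_eq_image hx hR, ncard_coe_finset, Finset.card_image_of_injOn, topFactorPairs,
    Finset.card_sigma, Finset.sum_filter]
  · rfl
  · rintro ⟨p, m⟩ hpm ⟨p', m'⟩ hpm' (heq : (∏ i, p i) * m = (∏ i, p' i) * m')
    have h := ((mem_topFactorPairs hx hR).1 hpm).2.1
    obtain ⟨rfl, rfl⟩ := (heq ▸ h).unique ((mem_topFactorPairs hx hR).1 hpm').2.1
    rfl

end TopFactorization

section JointLimit

theorem tendsto_uncurry_of_antitoneOn {α : Type*} {l : Filter α} {G : α → ℝ → ℝ} {g : ℝ → ℝ}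
    {s : Set ℝ} {w : ℝ} (hs : s ∈ 𝓝 w) (hG : ∀ᶠ x in l, AntitoneOn (G x) s)
    (hlim : ∀ v ∈ s, Tendsto (G · v) l (𝓝 (g v))) (hg : ContinuousAt g w) :
    Tendsto (Function.uncurry G) (l ×ˢ 𝓝 w) (𝓝 (g w)) := by
  refine tendsto_order.2 ⟨fun a ha => ?_, fun b hb => ?_⟩
  · obtain ⟨v, ⟨hvs, hav : a < g v⟩, hwv : w < v⟩ :=
      Filter.nonempty_of_mem <| inter_mem
        (mem_nhdsWithin_of_mem_nhds (inter_mem hs (hg (lt_mem_nhds ha))))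
        (self_mem_nhdsWithin (s := Ioi w))
    filter_upwards [(((hlim v hvs).eventually (lt_mem_nhds hav)).and hG).prod_mk
      (inter_mem (gt_mem_nhds hwv) hs)] with ⟨x, r⟩ ⟨⟨hax, hGx⟩, hrv, hrs⟩
    exact hax.trans_le (hGx hrs hvs (le_of_lt hrv))
  · obtain ⟨v, ⟨hvs, hvb : g v < b⟩, hvw : v < w⟩ :=
      Filter.nonempty_of_mem <| inter_mem
        (mem_nhdsWithin_of_mem_nhds (inter_mem hs (hg (gt_mem_nhds hb))))
        (self_mem_nhdsWithin (s := Iio w))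
    filter_upwards [(((hlim v hvs).eventually (gt_mem_nhds hvb)).and hG).prod_mk
      (inter_mem (lt_mem_nhds hvw) hs)] with ⟨x, r⟩ ⟨⟨hxb, hGx⟩, hvr, hrs⟩
    exact (hGx hvs hrs (le_of_lt hvr)).trans_lt hxb

theorem antitoneOn_smoothCount_rpow_inv_div {x : ℝ} (hx : 1 ≤ x) :
    AntitoneOn (fun w : ℝ => (smoothCount x (x ^ w⁻¹) : ℝ) / x) (Ioi 0) := by
  intro v (hv : 0 < v) w _ hvw
  have exponent_le : x ^ w⁻¹ ≤ x ^ v⁻¹ :=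
    Real.rpow_le_rpow_of_exponent_le hx (inv_anti₀ hv hvw)
  have count_le := smoothCount_mono_right x exponent_le
  dsimp only
  gcongr

theorem tendsto_smoothCount_uncurry {ρ : ℝ → ℝ} (hρ : ContinuousOn ρ (Ici 0)) {W w : ℝ}
    (hΨ : ∀ v ∈ Ioo 0 W, Tendsto (fun x : ℝ => (smoothCount x (x ^ v⁻¹) : ℝ) / x) atTop (𝓝 (ρ v)))
    (hw : w ∈ Ioo 0 W) :
    Tendsto (fun q : ℝ × ℝ => (smoothCount q.1 (q.1 ^ q.2⁻¹) : ℝ) / q.1) (atTop ×ˢ 𝓝 w)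
      (𝓝 (ρ w)) :=
  tendsto_uncurry_of_antitoneOn (Ioo_mem_nhds hw.1 hw.2)
    ((eventually_ge_atTop 1).mono fun _ hx =>
      (antitoneOn_smoothCount_rpow_inv_div hx).mono Ioo_subset_Ioi_self)
    hΨ (hρ.continuousAt (Ici_mem_nhds hw.1))

end JointLimit

section Simplex

variable {k : ℕ}

theorem isClosed_simplexSet (k : ℕ) : IsClosed (simplexSet k) := by
  have eq_inter : simplexSet k = (⋂ (i) (j) (_ : i ≤ j), {t : Fin k → ℝ | t j ≤ t i}) ∩
      ((⋂ i, {t | 0 ≤ t i}) ∩ {t | ∑ i, t i ≤ 1}) := by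
    ext t
    simp [simplexSet]
  rw [eq_inter]
  refine .inter (isClosed_iInter fun i => isClosed_iInter fun j => isClosed_iInter fun _ => ?_)
    (.inter (isClosed_iInter fun i => ?_) ?_) <;>
  exact isClosed_le (by fun_prop) (by fun_prop)

theorem convex_simplexSet (k : ℕ) : Convex ℝ (simplexSet k) := by
  rintro t ⟨t_anti, t_nonneg, t_sum⟩ r ⟨r_anti, r_nonneg, r_sum⟩ a b ha hb hab
  refine ⟨fun i j hij => ?_, fun i => ?_, ?_⟩ <;>
    simp only [Pi.add_apply, Pi.smul_apply, smul_eq_mul]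
  · exact add_le_add (mul_le_mul_of_nonneg_left (t_anti i j hij) ha)
      (mul_le_mul_of_nonneg_left (r_anti i j hij) hb)
  · exact add_nonneg (mul_nonneg ha (t_nonneg i)) (mul_nonneg hb (r_nonneg i))
  · rw [Finset.sum_add_distrib, ← Finset.mul_sum, ← Finset.mul_sum, ← hab]
    exact add_le_add (mul_le_of_le_one_right ha t_sum) (mul_le_of_le_one_right hb r_sum)

theorem le_sum_of_mem_simplexSet {t : Fin k → ℝ} (ht : t ∈ simplexSet k) (i : Fin k) :
    t i ≤ ∑ j, t j :=
  Finset.single_le_sum (fun j _ => ht.2.1 j) (Finset.mem_univ i)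

theorem sum_lt_one_of_mem_interior {t : Fin k → ℝ} {R : Set (Fin k → ℝ)}
    (hR : R ⊆ simplexSet k) (ht : t ∈ interior R) : ∑ i, t i < 1 := by
  refine (hR (interior_subset ht)).2.2.lt_of_ne fun sum_eq => ?_
  have scaling : Tendsto (fun c : ℝ => c • t) (𝓝[>] 1) (𝓝 t) := by
    have continuous_scaling : ContinuousAt (fun c : ℝ => c • t) 1 := by fun_prop
    simpa only [ContinuousAt, one_smul] using continuous_scaling.mono_left nhdsWithin_le_nhds
  obtain ⟨c, hcR : c • t ∈ R, hc : 1 < c⟩ :=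
    ((scaling.eventually (mem_interior_iff_mem_nhds.1 ht)).and self_mem_nhdsWithin).exists
  have sum_le := (hR hcR).2.2
  simp only [Pi.smul_apply, smul_eq_mul, ← Finset.mul_sum, sum_eq, mul_one] at sum_le
  exact sum_le.not_gt hc

end Simplex

section TopFactorDensity

variable {k : ℕ} {ρ : ℝ → ℝ} {R : Set (Fin k → ℝ)} {s : (Fin k → ℝ) → ℝ} {x ε : ℝ}

/-- The limiting density, at the vector `t` of logarithms of the `k` largest prime factors, of the
integers whose remaining prime factors are bounded by the exponent `s t`. -/
noncomputable def topFactorDensity (ρ : ℝ → ℝ) (s : (Fin k → ℝ) → ℝ) (t : Fin k → ℝ) : ℝ :=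
  ρ ((1 - ∑ i, t i) / s t) / ∏ i, t i

/-- The approximation to `topFactorDensity ρ s t` at height `x`, where `ρ` is replaced by the
proportion of smooth numbers up to `x ^ (1 - ∑ i, t i)`. -/
noncomputable def topFactorWeight (x : ℝ) (s : (Fin k → ℝ) → ℝ) (t : Fin k → ℝ) : ℝ :=
  smoothCount (x ^ (1 - ∑ i, t i)) (x ^ s t) / x ^ (1 - ∑ i, t i) / ∏ i, t i

theorem pow_le_prod_of_mem_Ici {t : Fin k → ℝ} (hε : 0 ≤ ε) (ht : t ∈ Ici fun _ => ε) :
    ε ^ k ≤ ∏ i, t i := by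
  simpa using Finset.prod_le_prod (s := Finset.univ) (fun _ _ => hε) fun i _ => ht i

theorem inter_Ici_subset_unitCube (hε : 0 < ε) :
    simplexSet k ∩ Ici (fun _ => ε) ⊆ unitCube (Fin k) := fun _ ht i _ =>
  ⟨hε.trans_le (ht.2 i), (le_sum_of_mem_simplexSet ht.1 i).trans ht.1.2.2⟩

theorem ncard_topFactorSet_div (hx : 1 < x) (hR : ∀ t ∈ R, Antitone t ∧ ∀ i, s t ≤ t i) :
    ((topFactorSet x R s).ncard : ℝ) / x =
      ∑ p ∈ Fintype.piFinset fun _ : Fin k => ⌊x⌋₊.primesLE,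
        (∏ i, Real.logb x (p i) / p i) *
          R.indicator (topFactorWeight x s) fun i => Real.logb x (p i) := by
  classical
  rw [ncard_topFactorSet hx hR, Nat.cast_sum, Finset.sum_div]
  refine Finset.sum_congr rfl fun p hp => ?_
  have prime (i) := Nat.prime_of_mem_primesLE (Fintype.mem_piFinset.1 hp i)
  split_ifs with hpR
  · have logs_pos : 0 < ∏ i, Real.logb x (p i) :=
      Finset.prod_pos fun i _ => Real.logb_pos hx (Nat.one_lt_cast.2 (prime i).one_lt)
    have prod_pos : 0 < ∏ i, (p i : ℝ) :=
      Finset.prod_pos fun i _ => Nat.cast_pos.2 (prime i).pos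
    have quotient_eq : x / ∏ i, (p i : ℝ) = x ^ (1 - ∑ i, Real.logb x (p i)) := by
      rw [Real.rpow_sub (one_pos.trans hx), Real.rpow_one,
        ← prod_natCast_eq_rpow hx fun i => (prime i).pos, Nat.cast_prod]
    rw [indicator_of_mem hpR, topFactorWeight, ← quotient_eq, Finset.prod_div_distrib]
    field_simp
  · rw [indicator_of_notMem hpR, Nat.cast_zero, zero_div, mul_zero]

theorem measurable_topFactorWeight (hs : Continuous s) (x : ℝ) :
    Measurable (topFactorWeight x s) := by
  have rest_meas : Measurable fun t : Fin k → ℝ => x ^ (1 - ∑ i, t i) := by fun_prop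
  have bound_meas : Measurable fun t => x ^ s t := hs.measurable.const_pow x
  exact ((measurable_smoothCount.comp (rest_meas.prodMk bound_meas)).div rest_meas).div
    (by fun_prop)

theorem abs_indicator_div_prod_le (hε : 0 < ε) (hR : R ⊆ Ici fun _ => ε) {g : (Fin k → ℝ) → ℝ}
    (hg : ∀ t ∈ R, |g t| ≤ 1) (t : Fin k → ℝ) :
    |R.indicator (fun t => g t / ∏ i, t i) t| ≤ (ε ^ k)⁻¹ := by
  have pow_pos := pow_pos hε k
  by_cases ht : t ∈ R
  · have pow_le := pow_le_prod_of_mem_Ici hε.le (hR ht)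
    rw [indicator_of_mem ht, abs_div, abs_of_pos (pow_pos.trans_le pow_le), ← one_div]
    exact div_le_div₀ zero_le_one (hg t ht) pow_pos pow_le
  · rw [indicator_of_notMem ht, abs_zero]
    positivity

theorem abs_smoothCount_div_le_one {y : ℝ} (hy : 0 < y) (z : ℝ) :
    |(smoothCount y z : ℝ) / y| ≤ 1 := by
  rw [abs_of_nonneg (by positivity), div_le_one hy]
  exact smoothCount_le hy.le z

theorem tendsto_topFactorWeight {t : Fin k → ℝ} (hs : Continuous s) (hst : 0 < s t)
    (ht : ∑ i, t i < 1) (ht₀ : ∀ i, t i ≠ 0)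
    (hΨ : Tendsto (fun q : ℝ × ℝ => (smoothCount q.1 (q.1 ^ q.2⁻¹) : ℝ) / q.1)
      (atTop ×ˢ 𝓝 ((1 - ∑ i, t i) / s t)) (𝓝 (ρ ((1 - ∑ i, t i) / s t)))) :
    Tendsto (fun q : ℝ × (Fin k → ℝ) => topFactorWeight q.1 s q.2) (atTop ×ˢ 𝓝 t)
      (𝓝 (topFactorDensity ρ s t)) := by
  have rest_pos : 0 < 1 - ∑ i, t i := sub_pos.2 ht
  have rest_tendsto : Tendsto (fun r : Fin k → ℝ => 1 - ∑ i, r i) (𝓝 t) (𝓝 (1 - ∑ i, t i)) :=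
    Continuous.tendsto (by fun_prop) t
  have base_tendsto : Tendsto (fun q : ℝ × (Fin k → ℝ) => q.1 ^ (1 - ∑ i, q.2 i))
      (atTop ×ˢ 𝓝 t) atTop := by
    refine tendsto_atTop_mono' _ ?_
      ((tendsto_rpow_atTop (half_pos rest_pos)).comp tendsto_fst)
    filter_upwards [(eventually_ge_atTop 1).prod_mk
      (rest_tendsto.eventually (lt_mem_nhds (half_lt_self rest_pos)))] with q hq
    exact Real.rpow_le_rpow_of_exponent_le hq.1 hq.2.le
  have ratio_tendsto : Tendsto (fun r : Fin k → ℝ => (1 - ∑ i, r i) / s r) (𝓝 t)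
      (𝓝 ((1 - ∑ i, t i) / s t)) := rest_tendsto.div (hs.tendsto t) hst.ne'
  have prod_tendsto : Tendsto (fun r : Fin k → ℝ => ∏ i, r i) (𝓝 t) (𝓝 (∏ i, t i)) :=
    Continuous.tendsto (by fun_prop) t
  refine ((hΨ.comp (base_tendsto.prodMk (ratio_tendsto.comp tendsto_snd))).div
    (prod_tendsto.comp tendsto_snd) (Finset.prod_ne_zero_iff.2 fun i _ => ht₀ i)).congr' ?_
  filter_upwards [(eventually_gt_atTop 0).prod_mk
    (rest_tendsto.eventually (lt_mem_nhds rest_pos))] with q ⟨hq, rest_pos⟩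
  simp only [Function.comp_apply, topFactorWeight, Pi.div_apply]
  rw [← Real.rpow_mul (le_of_lt hq), inv_div, mul_div_cancel₀ _ (ne_of_gt rest_pos)]

theorem continuousOn_topFactorDensity (hρ : ContinuousOn ρ (Ici 0)) (hs : Continuous s)
    (hR : R ⊆ simplexSet k) (hR₀ : ∀ t ∈ R, ∀ i, t i ≠ 0) (hsR : ∀ t ∈ R, 0 < s t) :
    ContinuousOn (topFactorDensity ρ s) R := by
  refine (hρ.comp ?_ fun t ht => ?_).div (by fun_prop) fun t ht =>
    Finset.prod_ne_zero_iff.2 fun i _ => hR₀ t ht i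
  · exact ContinuousOn.div (by fun_prop) hs.continuousOn fun t ht => (hsR t ht).ne'
  · exact div_nonneg (sub_nonneg.2 (hR ht).2.2) (hsR t ht).le

theorem tendsto_uncurry_indicator_of_notMem_frontier {α X : Type*} [TopologicalSpace X]
    {l : Filter α} {R : Set X} {F : α → X → ℝ} {f : X → ℝ} {t : X} (ht : t ∉ frontier R)
    (hF : t ∈ interior R → Tendsto (Function.uncurry F) (l ×ˢ 𝓝 t) (𝓝 (f t))) :
    Tendsto (Function.uncurry fun x => R.indicator (F x)) (l ×ˢ 𝓝 t) (𝓝 (R.indicator f t)) := by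
  by_cases htR : t ∈ interior R
  · rw [indicator_of_mem (interior_subset htR)]
    refine (hF htR).congr' ?_
    filter_upwards [prod_mem_prod univ_mem (mem_interior_iff_mem_nhds.1 htR)] with q hq
    exact (indicator_of_mem hq.2 (F q.1)).symm
  · have ht_closure : t ∉ closure R := fun h => ht ⟨h, htR⟩
    rw [indicator_of_notMem fun h => ht_closure (subset_closure h)]
    refine tendsto_const_nhds.congr' ?_
    filter_upwards [prod_mem_prod univ_mem (isClosed_closure.isOpen_compl.mem_nhds ht_closure)]
      with q hq
    exact (indicator_of_notMem (fun h => hq.2 (subset_closure h)) (F q.1)).symm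

theorem tendsto_ncard_topFactorSet_div (hρ : ContinuousOn ρ (Ici 0)) (hρ₀ : ρ 0 = 1)
    (hε : 0 < ε) (hR_meas : MeasurableSet R) (hR_frontier : volume (frontier R) = 0)
    (hR : R ⊆ simplexSet k ∩ Ici fun _ => ε) (hs : Continuous s)
    (hsR : ∀ t ∈ R, 0 < s t ∧ ∀ i, s t ≤ t i)
    (hΨ : ∀ t ∈ R, ∑ i, t i < 1 →
      Tendsto (fun q : ℝ × ℝ => (smoothCount q.1 (q.1 ^ q.2⁻¹) : ℝ) / q.1)
        (atTop ×ˢ 𝓝 ((1 - ∑ i, t i) / s t)) (𝓝 (ρ ((1 - ∑ i, t i) / s t)))) :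
    Tendsto (fun x : ℝ => ((topFactorSet x R s).ncard : ℝ) / x) atTop
      (𝓝 (∫ t in R, topFactorDensity ρ s t)) := by
  have hR_simplex : R ⊆ simplexSet k := fun t ht => (hR ht).1
  have hR_ne_zero (t) (ht : t ∈ R) (i) : t i ≠ 0 := (hε.trans_le ((hR ht).2 i)).ne'
  have abs_ρ_le (t) (ht : t ∈ R) : |ρ ((1 - ∑ i, t i) / s t)| ≤ 1 := by
    rcases (hR ht).1.2.2.eq_or_lt with sum_eq | sum_lt
    · simp [sum_eq, hρ₀]
    · refine le_of_tendsto (hΨ t ht sum_lt).abs ?_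
      filter_upwards [(eventually_gt_atTop 0).prod_inl _] with q hq
      exact abs_smoothCount_div_le_one hq _
  have density_meas : Measurable (R.indicator (topFactorDensity ρ s)) := by
    classical
    rw [← piecewise_eq_indicator]
    exact (continuousOn_topFactorDensity hρ hs hR_simplex hR_ne_zero fun t ht =>
      (hsR t ht).1).measurable_piecewise continuousOn_const hR_meas
  have integral_eq : ∫ t in unitCube (Fin k), R.indicator (topFactorDensity ρ s) t =
      ∫ t in R, topFactorDensity ρ s t := by
    rw [setIntegral_indicator hR_meas,
      inter_eq_right.2 (hR.trans (inter_Ici_subset_unitCube hε))]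
  rw [← integral_eq]
  refine (tendsto_sum_piFinset_primesLE
    (fun x => (measurable_topFactorWeight hs x).indicator hR_meas) density_meas
    ((eventually_gt_atTop 0).mono fun x hx => abs_indicator_div_prod_le hε (fun t ht => (hR ht).2)
      fun t _ => abs_smoothCount_div_le_one (Real.rpow_pos_of_pos hx _) _)
    (abs_indicator_div_prod_le hε (fun t ht => (hR ht).2) abs_ρ_le) ?_).congr' ?_
  · filter_upwards [ae_restrict_of_ae (measure_eq_zero_iff_ae_notMem.1 hR_frontier)] with t ht
    refine tendsto_uncurry_indicator_of_notMem_frontier ht fun ht_int => ?_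
    have htR := interior_subset ht_int
    have sum_lt := sum_lt_one_of_mem_interior hR_simplex ht_int
    exact tendsto_topFactorWeight hs (hsR t htR).1 sum_lt (hR_ne_zero t htR) (hΨ t htR sum_lt)
  · filter_upwards [eventually_gt_atTop 1] with x hx
    exact (ncard_topFactorSet_div hx fun t ht =>
      ⟨fun i j => (hR ht).1.1 i j, (hsR t ht).2⟩).symm

end TopFactorDensity

section Dickman

variable {ρ : ℝ → ℝ} {x : ℝ}

/-- `ρ` is the Dickman function on `[0, ∞)`; its values at negative arguments are arbitrary. -/
structure IsDickman (ρ : ℝ → ℝ) : Prop where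
  continuousOn : ContinuousOn ρ (Ici 0)
  eq_one : ∀ t, 0 ≤ t → t ≤ 1 → ρ t = 1
  hasDerivAt : ∀ t, 1 < t → HasDerivAt ρ (-ρ (t - 1) / t) t

theorem IsDickman.apply_zero (hρ : IsDickman ρ) : ρ 0 = 1 := hρ.eq_one 0 le_rfl zero_le_one

theorem IsDickman.apply_one (hρ : IsDickman ρ) : ρ 1 = 1 := hρ.eq_one 1 zero_le_one le_rfl

theorem IsTopFactorization.logb_mem_simplexSet {k n m : ℕ} {p : Fin k → ℕ}
    (h : IsTopFactorization n p m) (hx : 1 < x) (hnx : (n : ℝ) ≤ x) :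
    (fun i => Real.logb x (p i)) ∈ simplexSet k := by
  refine ⟨fun i j hij => ?_, fun i => ?_, ?_⟩
  · exact Real.logb_le_logb_of_le hx (Nat.cast_pos.2 (h.prime j).pos)
      (Nat.cast_le.2 (h.antitone hij))
  · exact Real.logb_nonneg hx (Nat.one_le_cast.2 (h.prime i).one_le)
  · have prod_le : ∏ i, p i ≤ n := Nat.le_of_dvd h.pos ⟨m, h.eq_prod_mul⟩
    have prod_le_rpow : ((∏ i, p i : ℕ) : ℝ) ≤ x ^ (1 : ℝ) :=
      (Nat.cast_le.2 prod_le).trans (hnx.trans_eq (Real.rpow_one x).symm)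
    rwa [prod_natCast_eq_rpow hx (fun i => (h.prime i).pos),
      Real.rpow_le_rpow_left_iff hx] at prod_le_rpow

theorem mem_topFactorSet_pi_Ioc_iff (hx : 1 < x) {a : ℝ} {n : ℕ} :
    n ∈ topFactorSet x (univ.pi fun _ : Fin 1 => Ioc a 1) (fun t => t 0) ↔
      n ≠ 0 ∧ (n : ℝ) ≤ x ∧ ∃ q : ℕ, q.Prime ∧ q ∣ n ∧ x ^ a < q := by
  constructor
  · rintro ⟨hnx, p, m, h, hp, -⟩
    refine ⟨h.pos.ne', hnx, p 0, h.prime 0, h.dvd 0, ?_⟩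
    rw [← rpow_logb_natCast hx (h.prime 0).pos]
    exact Real.rpow_lt_rpow_of_exponent_lt hx (hp 0 trivial).1
  · rintro ⟨hn, hnx, q, hq, hqn, haq⟩
    have n_ne_one : n ≠ 1 := by
      rintro rfl
      exact hq.ne_one (Nat.dvd_one.1 hqn)
    obtain ⟨r, m, r_prime, h, r_max⟩ :=
      (isTopFactorization_zero hn Fin.elim0).exists_snoc n_ne_one
    refine ⟨hnx, _, m, h, fun i _ => ?_, fun q' hq' hqm => ?_⟩
    · have mem_simplex := h.logb_mem_simplexSet hx hnx
      refine ⟨?_, (le_sum_of_mem_simplexSet mem_simplex i).trans mem_simplex.2.2⟩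
      dsimp only
      rw [Subsingleton.elim i (Fin.last 0), Fin.snoc_last,
        Real.lt_logb_iff_rpow_lt hx (Nat.cast_pos.2 r_prime.pos)]
      exact haq.trans_le (Nat.cast_le.2 (r_max q hq hqn))
    · rw [rpow_logb_natCast hx (h.prime 0).pos]
      exact Nat.cast_le.2 (h.le_of_prime_dvd 0 q' hq' hqm)

theorem smoothCount_add_ncard_topFactorSet (hx : 1 < x) (a : ℝ) :
    smoothCount x (x ^ a) +
      (topFactorSet x (univ.pi fun _ : Fin 1 => Ioc a 1) fun t => t 0).ncard = ⌊x⌋₊ := by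
  have x_nonneg : 0 ≤ x := zero_le_one.trans hx.le
  have compl_eq : topFactorSet x (univ.pi fun _ : Fin 1 => Ioc a 1) (fun t => t 0) =
      ↑(Finset.Ioc 0 ⌊x⌋₊ \ Nat.smoothNumbersUpTo ⌊x⌋₊ (⌊x ^ a⌋₊ + 1)) := by
    ext n
    rw [mem_topFactorSet_pi_Ioc_iff hx, Finset.mem_coe, Finset.mem_sdiff, Finset.mem_Ioc,
      mem_smoothNumbersUpTo_floor x_nonneg (Real.rpow_nonneg x_nonneg a),
      Nat.le_floor_iff x_nonneg, Nat.pos_iff_ne_zero]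
    push Not
    tauto
  have smooth_subset : Nat.smoothNumbersUpTo ⌊x⌋₊ (⌊x ^ a⌋₊ + 1) ⊆ Finset.Ioc 0 ⌊x⌋₊ := by
    intro n hn
    obtain ⟨hnx, hn⟩ := Nat.mem_smoothNumbersUpTo.1 hn
    exact Finset.mem_Ioc.2 ⟨Nat.pos_of_ne_zero hn.1, hnx⟩
  rw [compl_eq, ncard_coe_finset, smoothCount, add_comm,
    Finset.card_sdiff_add_card_eq_card smooth_subset, Nat.card_Ioc, Nat.sub_zero]

theorem IsDickman.integral_topFactorDensity_pi_Ioc (hρ : IsDickman ρ) {w : ℝ} (hw : 1 ≤ w) :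
    ∫ t in univ.pi fun _ : Fin 1 => Ioc w⁻¹ 1, topFactorDensity ρ (fun t => t 0) t = 1 - ρ w := by
  have w_inv_pos : 0 < w⁻¹ := inv_pos.2 (one_pos.trans_le hw)
  have w_inv_le : w⁻¹ ≤ 1 := inv_le_one_of_one_le₀ hw
  have integral_eq : ∫ t in univ.pi fun _ : Fin 1 => Ioc w⁻¹ 1,
      topFactorDensity ρ (fun t => t 0) t = ∫ a in w⁻¹..1, ρ ((1 - a) / a) / a := by
    have preimage_eq : (univ.pi fun _ : Fin 1 => Ioc w⁻¹ 1) =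
        MeasurableEquiv.funUnique (Fin 1) ℝ ⁻¹' Ioc w⁻¹ 1 := by
      ext t
      simp
    rw [intervalIntegral.integral_of_le w_inv_le, preimage_eq,
      ← (volume_preserving_funUnique (Fin 1) ℝ).setIntegral_preimage_emb
        (MeasurableEquiv.measurableEmbedding _)]
    refine setIntegral_congr_fun (MeasurableEquiv.measurable _ measurableSet_Ioc) fun t _ => ?_
    simp [topFactorDensity]
  have ne_zero : ∀ a ∈ Icc w⁻¹ 1, a ≠ 0 := fun a ha => (w_inv_pos.trans_le ha.1).ne'
  have deriv_comp_inv (a : ℝ) (ha : a ∈ Ioo w⁻¹ 1) :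
      HasDerivAt (fun a => ρ a⁻¹) (ρ ((1 - a) / a) / a) a := by
    have a_pos := w_inv_pos.trans ha.1
    have chain_rule :=
      (hρ.hasDerivAt a⁻¹ ((one_lt_inv₀ a_pos).2 ha.2)).comp a (hasDerivAt_inv a_pos.ne')
    refine chain_rule.congr_deriv ?_
    rw [show a⁻¹ - 1 = (1 - a) / a by field_simp]
    field_simp
  rw [integral_eq, intervalIntegral.integral_eq_sub_of_hasDerivAt_of_le w_inv_le
    (f := fun a => ρ a⁻¹) ?_ deriv_comp_inv ?_, inv_one, inv_inv, hρ.apply_one]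
  · exact hρ.continuousOn.comp (continuousOn_id.inv₀ ne_zero)
      fun a ha => inv_nonneg.2 (w_inv_pos.le.trans ha.1)
  · refine ContinuousOn.intervalIntegrable_of_Icc w_inv_le
      (.div (hρ.continuousOn.comp ?_ ?_) ?_ ne_zero)
    · exact .div (by fun_prop) (by fun_prop) ne_zero
    · exact fun a ha => div_nonneg (sub_nonneg.2 ha.2) (w_inv_pos.le.trans ha.1)
    · fun_prop

theorem IsDickman.tendsto_smoothCount_of_forall_mem_Ioo (hρ : IsDickman ρ) {W : ℝ}
    (hΨ : ∀ v ∈ Ioo 0 W, Tendsto (fun x : ℝ => (smoothCount x (x ^ v⁻¹) : ℝ) / x) atTop (𝓝 (ρ v)))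
    {w : ℝ} (hw : 1 ≤ w) (hwW : w < W + 1) :
    Tendsto (fun x : ℝ => (smoothCount x (x ^ w⁻¹) : ℝ) / x) atTop (𝓝 (ρ w)) := by
  have w_pos : 0 < w := one_pos.trans_le hw
  set R : Set (Fin 1 → ℝ) := univ.pi fun _ => Ioc w⁻¹ 1
  have R_le (t) (ht : t ∈ R) : w⁻¹ < t 0 ∧ t 0 ≤ 1 := ht 0 trivial
  have R_pos (t) (ht : t ∈ R) : 0 < t 0 := (inv_pos.2 w_pos).trans (R_le t ht).1
  have top_density := tendsto_ncard_topFactorSet_div (s := fun t : Fin 1 → ℝ => t 0) hρ.continuousOn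
    hρ.apply_zero (inv_pos.2 w_pos)
    (MeasurableSet.univ_pi fun _ => measurableSet_Ioc)
    ((convex_pi fun _ _ => convex_Ioc w⁻¹ 1).addHaar_frontier volume)
    (R := R) ?_ (by fun_prop) ?_ ?_
  · rw [hρ.integral_topFactorDensity_pi_Ioc hw] at top_density
    have compl_density := tendsto_nat_floor_div_atTop (R := ℝ) |>.sub top_density
    rw [sub_sub_cancel] at compl_density
    refine compl_density.congr' ?_
    filter_upwards [eventually_gt_atTop 1] with x hx
    rw [← sub_div, ← smoothCount_add_ncard_topFactorSet hx w⁻¹, Nat.cast_add, add_sub_cancel_right]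
  · intro t ht
    refine ⟨⟨fun i j _ => (congrArg t (Subsingleton.elim j i)).le, fun i => ?_, ?_⟩, fun i => ?_⟩
    · exact (congrArg t (Subsingleton.elim i 0)) ▸ (R_pos t ht).le
    · simpa using (R_le t ht).2
    · exact (ht i trivial).1.le
  · exact fun t ht => ⟨R_pos t ht, fun i => (congrArg t (Subsingleton.elim 0 i)).le⟩
  · intro t ht sum_lt
    rw [Fin.sum_univ_one] at sum_lt ⊢
    refine tendsto_smoothCount_uncurry hρ.continuousOn hΨ
      ⟨div_pos (sub_pos.2 sum_lt) (R_pos t ht), ?_⟩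
    rw [div_lt_iff₀ (R_pos t ht)]
    have := (inv_lt_iff_one_lt_mul₀ w_pos).1 (R_le t ht).1
    nlinarith [R_pos t ht]

theorem IsDickman.tendsto_smoothCount_div (hρ : IsDickman ρ) {w : ℝ} (hw : 0 < w) :
    Tendsto (fun x : ℝ => (smoothCount x (x ^ w⁻¹) : ℝ) / x) atTop (𝓝 (ρ w)) := by
  suffices h : ∀ n : ℕ, ∀ v ∈ Ioo (0 : ℝ) n,
      Tendsto (fun x : ℝ => (smoothCount x (x ^ v⁻¹) : ℝ) / x) atTop (𝓝 (ρ v)) by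
    obtain ⟨n, hn⟩ := exists_nat_gt w
    exact h n w ⟨hw, hn⟩
  intro n
  induction n with
  | zero => exact fun v hv => absurd (hv.1.trans hv.2) (by simp)
  | succ n ih =>
    intro v hv
    rcases le_total 1 v with hv₁ | hv₁
    · exact hρ.tendsto_smoothCount_of_forall_mem_Ioo ih hv₁ (by simpa using hv.2)
    · rw [hρ.eq_one v hv.1.le hv₁]
      refine (tendsto_nat_floor_div_atTop (R := ℝ)).congr' ?_
      filter_upwards [eventually_ge_atTop 1] with x hx
      rw [smoothCount_eq_floor (Real.self_le_rpow_of_one_le hx ((one_le_inv₀ hv.1).2 hv₁))]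

theorem IsDickman.mem_Icc (hρ : IsDickman ρ) {w : ℝ} (hw : 0 ≤ w) :
    ρ w ∈ Icc 0 1 := by
  rcases hw.eq_or_lt with rfl | hw
  · simp [hρ.apply_zero]
  refine isClosed_Icc.mem_of_tendsto (hρ.tendsto_smoothCount_div hw) ?_
  filter_upwards [eventually_gt_atTop 0] with x hx
  exact ⟨by positivity, div_le_one_of_le₀ (smoothCount_le hx.le _) hx.le⟩

theorem IsDickman.antitoneOn (hρ : IsDickman ρ) : AntitoneOn ρ (Ioi 0) := by
  intro v hv w hw hvw
  refine le_of_tendsto_of_tendsto (hρ.tendsto_smoothCount_div hw)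
    (hρ.tendsto_smoothCount_div hv) ?_
  filter_upwards [eventually_ge_atTop 1] with x hx
  exact antitoneOn_smoothCount_rpow_inv_div hx hv hw hvw

-- The derivative `ρ(w) - ρ(w - 1)` of `w ρ(w)` is nonpositive.
theorem IsDickman.le_inv (hρ : IsDickman ρ) {w : ℝ} (hw : 1 ≤ w) :
    ρ w ≤ w⁻¹ := by
  have mul_antitone : AntitoneOn (fun t => t * ρ t) (Ici 1) := by
    refine antitoneOn_of_hasDerivWithinAt_nonpos (convex_Ici 1)
      (continuousOn_id.mul (hρ.continuousOn.mono (Ici_subset_Ici.2 zero_le_one)))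
      (f' := fun t => 1 * ρ t + t * (-ρ (t - 1) / t)) ?_ ?_ <;>
      rw [interior_Ici] <;> intro t ht
    · exact ((hasDerivAt_id t).mul (hρ.hasDerivAt t ht)).hasDerivWithinAt
    · have t_pos : 0 < t := one_pos.trans ht
      rw [mul_div_cancel₀ _ t_pos.ne', one_mul, ← sub_eq_add_neg, sub_nonpos]
      exact hρ.antitoneOn (mem_Ioi.2 (sub_pos.2 ht)) t_pos (sub_le_self t zero_le_one)
  have mul_le := mul_antitone self_mem_Ici hw hw
  dsimp only at mul_le
  rwa [hρ.apply_one, mul_one, ← le_inv_mul_iff₀ (one_pos.trans_le hw),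
    mul_one] at mul_le

end Dickman

section FewLargePrimeFactors

variable {k : ℕ} {ρ : ℝ → ℝ} {x ε ε' : ℝ}

theorem volume_unitCube_lt_top (ι : Type*) [Fintype ι] : volume (unitCube ι) < ⊤ := by
  simp [unitCube, volume_pi_pi]

theorem measurableSet_simplexSet_inter_Ici (k : ℕ) (ε : ℝ) :
    MeasurableSet (simplexSet k ∩ Ici fun _ => ε) :=
  ((isClosed_simplexSet k).inter isClosed_Ici).measurableSet

theorem volume_frontier_simplexSet_inter_Ici (k : ℕ) (ε : ℝ) :
    volume (frontier (simplexSet k ∩ Ici fun _ => ε)) = 0 :=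
  ((convex_simplexSet k).inter (convex_Ici _)).addHaar_frontier volume

theorem IsDickman.tendsto_ncard_topFactorSet_div {R : Set (Fin k → ℝ)} {s : (Fin k → ℝ) → ℝ}
    (hρ : IsDickman ρ) (hε : 0 < ε) (hR_meas : MeasurableSet R)
    (hR_frontier : volume (frontier R) = 0) (hR : R ⊆ simplexSet k ∩ Ici fun _ => ε)
    (hs : Continuous s) (hsR : ∀ t ∈ R, 0 < s t ∧ ∀ i, s t ≤ t i) :
    Tendsto (fun x : ℝ => ((topFactorSet x R s).ncard : ℝ) / x) atTop
      (𝓝 (∫ t in R, topFactorDensity ρ s t)) := by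
  refine _root_.tendsto_ncard_topFactorSet_div hρ.continuousOn hρ.apply_zero hε hR_meas hR_frontier
    hR hs hsR fun t ht sum_lt => ?_
  exact tendsto_smoothCount_uncurry hρ.continuousOn
    (fun v hv => hρ.tendsto_smoothCount_div hv.1)
    ⟨div_pos (sub_pos.2 sum_lt) (hsR t ht).1, lt_add_one _⟩

theorem IsDickman.tendsto_atTop (hρ : IsDickman ρ) : Tendsto ρ atTop (𝓝 0) :=
  squeeze_zero' ((eventually_ge_atTop 0).mono fun _ hw => (hρ.mem_Icc hw).1)
    ((eventually_ge_atTop 1).mono fun _ hw => hρ.le_inv hw) tendsto_inv_atTop_zero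

theorem IsDickman.topFactorDensity_nonneg (hρ : IsDickman ρ) {s : (Fin k → ℝ) → ℝ} {t : Fin k → ℝ}
    (ht : t ∈ simplexSet k) (hs : 0 ≤ s t) : 0 ≤ topFactorDensity ρ s t :=
  div_nonneg (hρ.mem_Icc (div_nonneg (sub_nonneg.2 ht.2.2) hs)).1
    (Finset.prod_nonneg fun i _ => ht.2.1 i)

theorem IsDickman.abs_topFactorDensity_le (hρ : IsDickman ρ) (hε : 0 < ε)
    {s : (Fin k → ℝ) → ℝ} {t : Fin k → ℝ} (ht : t ∈ simplexSet k ∩ Ici fun _ => ε)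
    (hs : 0 ≤ s t) : |topFactorDensity ρ s t| ≤ (ε ^ k)⁻¹ := by
  rw [abs_of_nonneg (hρ.topFactorDensity_nonneg ht.1 hs), topFactorDensity, ← one_div]
  exact div_le_div₀ zero_le_one (hρ.mem_Icc (div_nonneg (sub_nonneg.2 ht.1.2.2) hs)).2
    (pow_pos hε k) (pow_le_prod_of_mem_Ici hε.le ht.2)

theorem volume_simplexSet_inter_Ici_ne_top (hε : 0 < ε) :
    volume (simplexSet k ∩ Ici fun _ => ε) ≠ ⊤ :=
  ((measure_mono (inter_Ici_subset_unitCube hε)).trans_lt (volume_unitCube_lt_top (Fin k))).ne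

theorem IsDickman.aestronglyMeasurable_topFactorDensity (hρ : IsDickman ρ) (hε : 0 < ε)
    {s : (Fin k → ℝ) → ℝ} (hs : Continuous s)
    (hs₀ : ∀ t ∈ simplexSet k ∩ Ici fun _ => ε, 0 < s t) :
    AEStronglyMeasurable (topFactorDensity ρ s)
      (volume.restrict (simplexSet k ∩ Ici fun _ => ε)) :=
  have ne_zero (t) (ht : t ∈ simplexSet k ∩ Ici fun _ => ε) (i) : t i ≠ 0 :=
    (hε.trans_le (ht.2 i)).ne'
  (continuousOn_topFactorDensity hρ.continuousOn hs inter_subset_left ne_zero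
    hs₀).aestronglyMeasurable (measurableSet_simplexSet_inter_Ici k ε)

theorem IsDickman.tendsto_integral_topFactorDensity_const (hρ : IsDickman ρ) (hε' : 0 < ε') :
    Tendsto (fun ε => ∫ t in simplexSet k ∩ Ici fun _ => ε', topFactorDensity ρ (fun _ => ε) t)
      (𝓝[>] 0) (𝓝 0) := by
  set R : Set (Fin k → ℝ) := simplexSet k ∩ Ici fun _ => ε'
  suffices h : Tendsto (fun ε => ∫ t in R, topFactorDensity ρ (fun _ => ε) t) (𝓝[>] 0)
      (𝓝 (∫ _ in R, (0 : ℝ))) by simpa only [integral_zero] using h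
  have ae_mem : ∀ᵐ t ∂volume.restrict R, t ∈ R :=
    ae_restrict_mem (measurableSet_simplexSet_inter_Ici k ε')
  refine tendsto_integral_filter_of_dominated_convergence (fun _ => (ε' ^ k)⁻¹) ?_ ?_
    (integrableOn_const (volume_simplexSet_inter_Ici_ne_top hε')) ?_
  · filter_upwards [self_mem_nhdsWithin] with ε hε
    exact hρ.aestronglyMeasurable_topFactorDensity hε' continuous_const fun _ _ => hε
  · filter_upwards [self_mem_nhdsWithin] with ε hε
    exact ae_mem.mono fun t ht => hρ.abs_topFactorDensity_le hε' ht (le_of_lt hε)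
  · filter_upwards [ae_mem, ae_restrict_of_ae (measure_eq_zero_iff_ae_notMem.1
      (volume_frontier_simplexSet_inter_Ici k ε'))] with t ht ht_frontier
    have t_interior : t ∈ interior R := by
      by_contra h
      exact ht_frontier ⟨subset_closure ht, h⟩
    have rest_pos : 0 < 1 - ∑ i, t i :=
      sub_pos.2 (sum_lt_one_of_mem_interior inter_subset_left t_interior)
    have ratio_tendsto : Tendsto (fun ε => (1 - ∑ i, t i) / ε) (𝓝[>] 0) atTop :=
      tendsto_inv_nhdsGT_zero.const_mul_atTop rest_pos
    simpa [topFactorDensity] using (hρ.tendsto_atTop.comp ratio_tendsto).div_const (∏ i, t i)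

/-- The positive integers up to `x` with fewer than `k` prime factors `≥ x ^ ε`, counted with
multiplicity. -/
def fewLargePrimeFactors (k : ℕ) (ε x : ℝ) : Set ℕ :=
  {n | n ≠ 0 ∧ (n : ℝ) ≤ x ∧
    ¬∃ (p : Fin k → ℕ) (m : ℕ), IsTopFactorization n p m ∧ ∀ i, ε ≤ Real.logb x (p i)}

theorem finite_fewLargePrimeFactors (k : ℕ) (ε x : ℝ) : (fewLargePrimeFactors k ε x).Finite :=
  (finite_setOf_natCast_le x).subset fun _ hn => hn.2.1

theorem fewLargePrimeFactors_zero (ε x : ℝ) : fewLargePrimeFactors 0 ε x = ∅ :=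
  eq_empty_of_forall_notMem fun _ ⟨hn, _, h⟩ =>
    h ⟨Fin.elim0, _, isTopFactorization_zero hn _, fun i => i.elim0⟩

theorem fewLargePrimeFactors_succ_subset (hx : 1 < x) (hε : ε ≤ ε') :
    fewLargePrimeFactors (k + 1) ε x ⊆ fewLargePrimeFactors k ε' x ∪
      topFactorSet x (simplexSet k ∩ Ici fun _ => ε') fun _ => ε := by
  rintro n ⟨hn, hnx, h_few⟩
  refine or_iff_not_imp_left.2 fun h_many => ?_
  obtain ⟨p, m, h, hp⟩ : ∃ (p : Fin k → ℕ) (m : ℕ), IsTopFactorization n p m ∧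
      ∀ i, ε' ≤ Real.logb x (p i) := by
    by_contra h
    exact h_many ⟨hn, hnx, h⟩
  refine ⟨hnx, p, m, h, ⟨h.logb_mem_simplexSet hx hnx, hp⟩, fun q hq hqm => ?_⟩
  by_contra! q_large
  refine h_few ?_
  have m_ne_one : m ≠ 1 := by
    rintro rfl
    exact hq.ne_one (Nat.dvd_one.1 hqm)
  obtain ⟨r, m', r_prime, h', r_max⟩ := h.exists_snoc m_ne_one
  refine ⟨_, m', h', Fin.lastCases ?_ fun i => ?_⟩
  · rw [Fin.snoc_last, Real.le_logb_iff_rpow_le hx (Nat.cast_pos.2 r_prime.pos)]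
    exact q_large.le.trans (Nat.cast_le.2 (r_max q hq hqm))
  · rw [Fin.snoc_castSucc]
    exact hε.trans (hp i)

theorem IsDickman.exists_eventually_ncard_fewLargePrimeFactors_le (hρ : IsDickman ρ) (k : ℕ) :
    ∀ κ > 0, ∃ ε > 0, ∀ᶠ x : ℝ in atTop, ((fewLargePrimeFactors k ε x).ncard : ℝ) / x ≤ κ := by
  induction k with
  | zero =>
    refine fun κ hκ => ⟨1, one_pos, Eventually.of_forall fun x => ?_⟩
    simpa [fewLargePrimeFactors_zero] using le_of_lt hκ
  | succ k ih =>
    intro κ hκ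
    obtain ⟨ε', hε', few_le⟩ := ih (κ / 2) (half_pos hκ)
    obtain ⟨ε, integral_lt, hε, hε_le⟩ :=
      ((hρ.tendsto_integral_topFactorDensity_const (k := k) hε').eventually
        (gt_mem_nhds (half_pos hκ)) |>.and (Ioc_mem_nhdsGT hε')).exists
    refine ⟨ε, hε, ?_⟩
    have top_density := hρ.tendsto_ncard_topFactorSet_div hε'
      (measurableSet_simplexSet_inter_Ici k ε') (volume_frontier_simplexSet_inter_Ici k ε')
      subset_rfl (s := fun _ => ε) continuous_const fun t ht => ⟨hε, fun i => hε_le.trans (ht.2 i)⟩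
    filter_upwards [few_le, top_density.eventually (gt_mem_nhds integral_lt),
      eventually_gt_atTop 1] with x few_le top_lt hx
    have ncard_le : ((fewLargePrimeFactors (k + 1) ε x).ncard : ℝ) ≤
        (fewLargePrimeFactors k ε' x).ncard +
          (topFactorSet x (simplexSet k ∩ Ici fun _ => ε') fun _ => ε).ncard := by
      exact_mod_cast (ncard_le_ncard (fewLargePrimeFactors_succ_subset hx hε_le)
        ((finite_fewLargePrimeFactors k ε' x).union (finite_topFactorSet x _ _))).trans
        (ncard_union_le _ _)
    calc ((fewLargePrimeFactors (k + 1) ε x).ncard : ℝ) / x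
        ≤ (fewLargePrimeFactors k ε' x).ncard / x +
          (topFactorSet x (simplexSet k ∩ Ici fun _ => ε') fun _ => ε).ncard / x := by
          rw [← add_div]
          gcongr
      _ ≤ κ / 2 + κ / 2 := add_le_add few_le top_lt.le
      _ = κ := add_halves κ

end FewLargePrimeFactors

section LastPrimeFactor

variable {k : ℕ} {ρ : ℝ → ℝ} {x ε : ℝ} {l : Fin k}

theorem aecover_simplexSet_Ici (k : ℕ) :
    AECover (volume.restrict (simplexSet k)) (𝓝[>] 0) fun ε : ℝ => Ici fun _ : Fin k => ε := by
  refine aecover_restrict_of_ae_imp (isClosed_simplexSet k).measurableSet ?_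
    fun _ => measurableSet_Ici
  filter_upwards [ae_all_iff.2 fun i => Measure.ae_eval_ne (fun _ : Fin k => volume) i (0 : ℝ)]
    with t t_ne ht
  refine eventually_all.2 fun i => ?_
  filter_upwards [Ioc_mem_nhdsGT ((ht.2.1 i).lt_of_ne' (t_ne i))] with ε hε using hε.2

theorem pos_and_le_of_mem_inter_Ici (hl : ∀ i, i ≤ l) (hε : 0 < ε) {t : Fin k → ℝ}
    (ht : t ∈ simplexSet k ∩ Ici fun _ => ε) : 0 < t l ∧ ∀ i, t l ≤ t i :=
  ⟨hε.trans_le (ht.2 l), fun i => ht.1.1 i l (hl i)⟩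

theorem IsDickman.integral_topFactorDensity_inter_Ici_le_one (hρ : IsDickman ρ)
    (hl : ∀ i, i ≤ l) (hε : 0 < ε) :
    ∫ t in simplexSet k ∩ Ici fun _ => ε, topFactorDensity ρ (fun t => t l) t ≤ 1 := by
  refine le_of_tendsto (hρ.tendsto_ncard_topFactorSet_div hε
    (measurableSet_simplexSet_inter_Ici k ε) (volume_frontier_simplexSet_inter_Ici k ε)
    subset_rfl (continuous_apply l) fun t => pos_and_le_of_mem_inter_Ici hl hε) ?_
  filter_upwards [eventually_gt_atTop 0] with x hx
  exact (div_le_one hx).2 (ncard_le_of_forall_mem hx.le fun n ⟨hnx, _, _, h, _⟩ =>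
    ⟨h.pos.ne', hnx⟩)

theorem IsDickman.integrableOn_topFactorDensity_inter_Ici (hρ : IsDickman ρ) (hε : 0 < ε) :
    IntegrableOn (topFactorDensity ρ fun t => t l) (simplexSet k ∩ Ici fun _ => ε) := by
  have last_pos (t) (ht : t ∈ simplexSet k ∩ Ici fun _ => ε) : 0 < t l := hε.trans_le (ht.2 l)
  refine Integrable.mono' (integrableOn_const (C := (ε ^ k)⁻¹)
      (volume_simplexSet_inter_Ici_ne_top hε))
    (hρ.aestronglyMeasurable_topFactorDensity hε (continuous_apply l) last_pos) ?_
  filter_upwards [ae_restrict_mem (measurableSet_simplexSet_inter_Ici k ε)] with t ht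
  exact hρ.abs_topFactorDensity_le hε ht (last_pos t ht).le

theorem IsDickman.integrableOn_topFactorDensity (hρ : IsDickman ρ) (hl : ∀ i, i ≤ l) :
    IntegrableOn (topFactorDensity ρ fun t => t l) (simplexSet k) := by
  obtain ⟨ε, -, ε_pos, ε_tendsto⟩ := exists_seq_strictAnti_tendsto (0 : ℝ)
  have cover : AECover (volume.restrict (simplexSet k)) atTop fun n => Ici fun _ : Fin k => ε n :=
    (aecover_simplexSet_Ici k).comp_tendsto
      (tendsto_nhdsWithin_iff.2 ⟨ε_tendsto, Eventually.of_forall ε_pos⟩)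
  refine cover.integrable_of_integral_bounded_of_nonneg_ae 1 (fun n => ?_) ?_
    (Eventually.of_forall fun n => ?_)
  · rw [IntegrableOn, Measure.restrict_restrict measurableSet_Ici, inter_comm]
    exact hρ.integrableOn_topFactorDensity_inter_Ici (ε_pos n)
  · filter_upwards [ae_restrict_mem (isClosed_simplexSet k).measurableSet] with t ht
    exact hρ.topFactorDensity_nonneg ht (ht.2.1 l)
  · rw [Measure.restrict_restrict measurableSet_Ici, inter_comm]
    exact hρ.integral_topFactorDensity_inter_Ici_le_one hl (ε_pos n)

theorem mem_topFactorSet_apply_iff (hx : 1 < x) {R : Set (Fin k → ℝ)} {n : ℕ} :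
    n ∈ topFactorSet x R (fun t => t l) ↔ (n : ℝ) ≤ x ∧
      ∃ p m, IsTopFactorization n p m ∧ (fun i => Real.logb x (p i)) ∈ R := by
  refine and_congr_right fun _ => exists₂_congr fun p m => and_congr_right fun h =>
    and_iff_left fun q hq hqm => ?_
  rw [rpow_logb_natCast hx (h.prime l).pos]
  exact Nat.cast_le.2 (h.le_of_prime_dvd l q hq hqm)

end LastPrimeFactor

section DivisorGapRegion

variable {k : ℕ} {u v : ℝ}

/-- The union of the polytopes `Puv u v ℰ`. These are the vectors of logarithms, to base `x`, of the
large prime factors of the integers near `x` without divisors between `x ^ u` and `x ^ v`. -/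
def divisorGapRegion (u v : ℝ) (k : ℕ) : Set (Fin k → ℝ) :=
  {t | t ∈ simplexSet k ∧ ∀ E : Finset (Fin k), v ≤ ∑ i ∈ E, t i ∨ 1 - u ≤ ∑ i ∈ Eᶜ, t i}

theorem divisorGapRegion_subset_simplexSet (u v : ℝ) (k : ℕ) :
    divisorGapRegion u v k ⊆ simplexSet k := fun _ ht => ht.1

theorem iUnion_Puv (u v : ℝ) (k : ℕ) :
    ⋃ ℰ : Finset (Finset (Fin k)), Puv u v ℰ = divisorGapRegion u v k := by
  classical
  ext t
  refine mem_iUnion.trans ⟨fun ⟨ℰ, ht, hℰ⟩ => ⟨ht, fun E => ?_⟩, fun ⟨ht, h⟩ =>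
    ⟨Finset.univ.filter fun E => v ≤ ∑ i ∈ E, t i, ht, fun E => ?_⟩⟩
  · exact (em (E ∈ ℰ)).imp (hℰ E).1 (hℰ E).2
  · simpa using (h E).resolve_left ∘ not_le.2

theorem pairwise_disjoint_Puv (huv : u < v) (k : ℕ) :
    Pairwise (Function.onFun Disjoint
      (Puv u v : Finset (Finset (Fin k)) → Set (Fin k → ℝ))) := by
  have subset_of_mem {ℰ ℱ : Finset (Finset (Fin k))} {t : Fin k → ℝ} (htℰ : t ∈ Puv u v ℰ)
      (htℱ : t ∈ Puv u v ℱ) : ℰ ⊆ ℱ := fun E hEℰ => by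
    by_contra hEℱ
    have sum_E := (htℰ.2 E).1 hEℰ
    have sum_compl := (htℱ.2 E).2 hEℱ
    linarith [htℰ.1.2.2, Finset.sum_add_sum_compl E t]
  exact fun ℰ ℱ hne => disjoint_left.2 fun t htℰ htℱ =>
    hne ((subset_of_mem htℰ htℱ).antisymm (subset_of_mem htℱ htℰ))

theorem Puv_eq_inter_iInter (u v : ℝ) (ℰ : Finset (Finset (Fin k))) :
    Puv u v ℰ = simplexSet k ∩ ((⋂ E ∈ ℰ, {t | v ≤ ∑ i ∈ E, t i}) ∩
      ⋂ E ∉ ℰ, {t | 1 - u ≤ ∑ i ∈ Eᶜ, t i}) := by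
  ext t
  simp only [Puv, forall_and, mem_inter_iff, mem_iInter, mem_ofPred_eq]

theorem isClosed_Puv (u v : ℝ) (ℰ : Finset (Finset (Fin k))) : IsClosed (Puv u v ℰ) := by
  rw [Puv_eq_inter_iInter]
  refine (isClosed_simplexSet k).inter (.inter ?_ ?_) <;>
    exact isClosed_biInter fun E _ => isClosed_le continuous_const (by fun_prop)

theorem convex_Puv (u v : ℝ) (ℰ : Finset (Finset (Fin k))) : Convex ℝ (Puv u v ℰ) := by
  have halfSpace_convex (c : ℝ) (E : Finset (Fin k)) :
      Convex ℝ {t : Fin k → ℝ | c ≤ ∑ i ∈ E, t i} := by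
    have hlin : IsLinearMap ℝ fun t : Fin k → ℝ => ∑ i ∈ E, t i :=
      ⟨fun s t => by simp [Finset.sum_add_distrib], fun a t => by simp [Finset.mul_sum]⟩
    exact convex_halfSpace_ge hlin c
  rw [Puv_eq_inter_iInter]
  exact (convex_simplexSet k).inter (.inter
    (convex_iInter₂ fun E _ => halfSpace_convex v E)
    (convex_iInter₂ fun E _ => halfSpace_convex (1 - u) Eᶜ))

theorem measurableSet_divisorGapRegion (u v : ℝ) (k : ℕ) :
    MeasurableSet (divisorGapRegion u v k) := by
  rw [← iUnion_Puv]
  exact .iUnion fun ℰ => (isClosed_Puv u v ℰ).measurableSet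

theorem frontier_iUnion_subset {X ι : Type*} [TopologicalSpace X] [Finite ι] (s : ι → Set X) :
    frontier (⋃ i, s i) ⊆ ⋃ i, frontier (s i) := by
  rintro t ⟨ht_closure, ht_interior⟩
  rw [closure_iUnion_of_finite, mem_iUnion] at ht_closure
  obtain ⟨i, hti⟩ := ht_closure
  exact mem_iUnion.2 ⟨i, hti, fun h => ht_interior (interior_mono (subset_iUnion s i) h)⟩

theorem volume_frontier_divisorGapRegion_inter_Ici (u v : ℝ) (k : ℕ) (ε : ℝ) :
    volume (frontier (divisorGapRegion u v k ∩ Ici fun _ => ε)) = 0 := by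
  rw [← iUnion_Puv, iUnion_inter]
  exact measure_mono_null (frontier_iUnion_subset _) (measure_iUnion_null fun ℰ =>
    ((convex_Puv u v ℰ).inter (convex_Ici _)).addHaar_frontier volume)

theorem eventually_mem_divisorGapRegion_iff (u v : ℝ) (t : Fin k → ℝ) :
    ∀ᶠ w in 𝓝[≥] u, (t ∈ divisorGapRegion w v k ↔ t ∈ divisorGapRegion u v k) := by
  have eventually_le_iff (c : ℝ) : ∀ᶠ w in 𝓝[≥] u, (1 - w ≤ c ↔ 1 - u ≤ c) := by
    rcases le_or_gt (1 - u) c with hc | hc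
    · filter_upwards [self_mem_nhdsWithin] with w hw
      exact iff_of_true ((sub_le_sub_left hw 1).trans hc) hc
    · filter_upwards [nhdsWithin_le_nhds (Iio_mem_nhds (lt_sub_comm.1 hc))] with w hw
      exact iff_of_false (not_le.2 (lt_sub_comm.1 hw)) (not_le.2 hc)
  filter_upwards [eventually_all.2 fun E : Finset (Fin k) => eventually_le_iff (∑ i ∈ Eᶜ, t i)]
    with w hw
  simp only [divisorGapRegion, mem_ofPred_eq, hw]

theorem continuousWithinAt_setIntegral_divisorGapRegion {f : (Fin k → ℝ) → ℝ}
    (hf : IntegrableOn f (simplexSet k)) (u v : ℝ) :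
    ContinuousWithinAt (fun w => ∫ t in divisorGapRegion w v k, f t) (Ici u) u := by
  have integral_eq (w : ℝ) : ∫ t in divisorGapRegion w v k, f t =
      ∫ t in simplexSet k, (divisorGapRegion w v k).indicator f t := by
    rw [setIntegral_indicator (measurableSet_divisorGapRegion w v k),
      inter_eq_right.2 (divisorGapRegion_subset_simplexSet w v k)]
  simp only [integral_eq]
  refine continuousWithinAt_of_dominated (bound := fun t => ‖f t‖)
    (Eventually.of_forall fun w => hf.aestronglyMeasurable.indicator
      (measurableSet_divisorGapRegion w v k))
    (Eventually.of_forall fun w => Eventually.of_forall fun t => norm_indicator_le_norm_self f t)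
    hf.norm (Eventually.of_forall fun t => ?_)
  refine tendsto_const_nhds.congr' ?_
  filter_upwards [eventually_mem_divisorGapRegion_iff u v t] with w hw
  classical
  simp only [indicator_apply, hw]

theorem sum_setIntegral_Puv {f : (Fin k → ℝ) → ℝ} (hf : IntegrableOn f (simplexSet k))
    (huv : u < v) :
    ∑ ℰ : Finset (Finset (Fin k)), ∫ t in Puv u v ℰ, f t =
      ∫ t in divisorGapRegion u v k, f t := by
  rw [← iUnion_Puv, integral_iUnion_fintype (fun ℰ => (isClosed_Puv u v ℰ).measurableSet)
    (pairwise_disjoint_Puv huv k) fun ℰ => hf.mono_set fun t ht => ht.1]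

end DivisorGapRegion

section DivisorFree

variable {k n m : ℕ} {p : Fin k → ℕ} {ρ : ℝ → ℝ} {u v w x ε : ℝ} {l : Fin k}

namespace IsTopFactorization

theorem rpow_le_of_dvd (h : IsTopFactorization n p m) (hx : 1 < x) (hnx : (n : ℝ) ≤ x)
    (hp : (fun i => Real.logb x (p i)) ∈ divisorGapRegion u v k) {d : ℕ} (hd : d ∣ n)
    (hud : x ^ u < d) : x ^ v ≤ d := by
  obtain ⟨e, rfl⟩ := hd
  obtain ⟨E, F, b, c, hEF, disj, rfl, rfl, rfl⟩ := mul_eq_mul_prime_prod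
    (fun i _ => (h.prime i).prime) (h.eq_prod_mul.trans (mul_comm _ _))
  obtain rfl : F = Eᶜ := (IsCompl.of_eq disj.eq_bot hEF).compl_eq.symm
  obtain ⟨hb, hc⟩ := mul_ne_zero_iff.1 h.cofactor_ne_zero
  have rpow_le_mul_prod {y : ℝ} {a : ℕ} (ha : a ≠ 0) {G : Finset (Fin k)}
      (hG : y ≤ ∑ i ∈ G, Real.logb x (p i)) : x ^ y ≤ (a * ∏ i ∈ G, p i : ℕ) := by
    refine (Real.rpow_le_rpow_of_exponent_le hx.le hG).trans ?_
    rw [← prod_natCast_eq_rpow hx fun i => (h.prime i).pos]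
    exact Nat.cast_le.2 (Nat.le_mul_of_pos_left _ (Nat.pos_of_ne_zero ha))
  refine (hp.2 E).elim (rpow_le_mul_prod hb) fun hE => absurd hnx (not_le.2 ?_)
  calc x = x ^ u * x ^ (1 - u) := by
        rw [← Real.rpow_add (one_pos.trans hx), add_sub_cancel, Real.rpow_one]
    _ < _ := by
        rw [Nat.cast_mul]
        exact mul_lt_mul hud (rpow_le_mul_prod hc hE)
          (Real.rpow_pos_of_pos (one_pos.trans hx) _) (Nat.cast_nonneg _)

theorem pow_succ_le_of_prime_dvd (h : IsTopFactorization n p m) {q : ℕ} (hq : q.Prime)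
    (hqm : q ∣ m) : q ^ (k + 1) ≤ n := by
  rw [h.eq_prod_mul, pow_succ]
  refine Nat.mul_le_mul ?_ (Nat.le_of_dvd (Nat.pos_of_ne_zero h.cofactor_ne_zero) hqm)
  simpa using Finset.prod_le_prod' (s := Finset.univ) fun i _ => h.le_of_prime_dvd i q hq hqm

theorem lt_rpow_of_prime_dvd (h : IsTopFactorization n p m) (hx : 1 < x) (hnx : (n : ℝ) ≤ x)
    (hw : 1 < (k + 1) * w) {q : ℕ} (hq : q.Prime) (hqm : q ∣ m) : (q : ℝ) < x ^ w := by
  by_contra! hle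
  refine lt_irrefl x ?_
  calc x = x ^ (1 : ℝ) := (Real.rpow_one x).symm
    _ < x ^ (w * (k + 1 : ℕ)) := Real.rpow_lt_rpow_of_exponent_lt hx (by push_cast; linarith)
    _ = (x ^ w) ^ (k + 1) := Real.rpow_mul_natCast (one_pos.trans hx).le w (k + 1)
    _ ≤ (q : ℝ) ^ (k + 1) :=
        pow_le_pow_left₀ (Real.rpow_nonneg (one_pos.trans hx).le w) hle _
    _ ≤ n := mod_cast h.pow_succ_le_of_prime_dvd hq hqm
    _ ≤ x := hnx

end IsTopFactorization

-- Multiplying `c` by the prime factors of `m` one at a time never jumps across `(a, b)`.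
theorem natCast_mul_le_of_forall_dvd {a b : ℝ} {c : ℕ} (hm : m ≠ 0) (hc : (c : ℝ) ≤ a)
    (h_prime : ∀ q : ℕ, q.Prime → q ∣ m → a * q < b)
    (h_gap : ∀ e, e ∣ m → a < (c * e : ℕ) → b ≤ (c * e : ℕ)) : ((c * m : ℕ) : ℝ) ≤ a := by
  suffices h : ∀ e, e ∣ m → ((c * e : ℕ) : ℝ) ≤ a from h m dvd_rfl
  intro e
  induction e using induction_on_primes with
  | zero => exact fun h => absurd (zero_dvd_iff.1 h) hm
  | one => simpa using hc
  | prime_mul q e hq ih =>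
    intro hqe
    by_contra! hlt
    refine ((h_gap (q * e) hqe hlt).trans_lt ?_).false
    calc ((c * (q * e) : ℕ) : ℝ) = (c * e : ℕ) * q := by push_cast; ring
      _ ≤ a * q := by gcongr; exact ih (dvd_of_mul_left_dvd hqe)
      _ < b := h_prime q hq (dvd_of_mul_right_dvd hqe)

theorem IsTopFactorization.logb_mem_divisorGapRegion (h : IsTopFactorization n p m) (hx : 1 < x)
    (hnx : (n : ℝ) ≤ x) (hwn : x ^ (1 - w) ≤ n) (huv : 1 < (k + 1) * (v - u))
    (hd : ∀ d : ℕ, d ∣ n → x ^ u < d → x ^ v ≤ d) :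
    (fun i => Real.logb x (p i)) ∈ divisorGapRegion (u + w) v k := by
  have x_pos := one_pos.trans hx
  refine ⟨h.logb_mem_simplexSet hx hnx, fun E => ?_⟩
  have prod_mul_dvd {e : ℕ} (he : e ∣ m) : (∏ i ∈ E, p i) * e ∣ n :=
    h.eq_prod_mul ▸ mul_dvd_mul (Finset.prod_dvd_prod_of_subset _ _ _ E.subset_univ) he
  rcases lt_or_ge (x ^ u) (∏ i ∈ E, p i : ℕ) with hE | hE
  · have v_le := hd _ (by simpa using prod_mul_dvd (one_dvd m)) hE
    rw [prod_natCast_eq_rpow hx fun i => (h.prime i).pos] at v_le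
    exact Or.inl ((Real.rpow_le_rpow_left_iff hx).1 v_le)
  · have prod_mul_le : (((∏ i ∈ E, p i) * m : ℕ) : ℝ) ≤ x ^ u := by
      refine natCast_mul_le_of_forall_dvd (b := x ^ v) h.cofactor_ne_zero hE (fun q hq hqm => ?_)
        fun e he => hd _ (prod_mul_dvd he)
      calc x ^ u * q < x ^ u * x ^ (v - u) := by
            gcongr
            exact h.lt_rpow_of_prime_dvd hx hnx huv hq hqm
        _ = x ^ v := by rw [← Real.rpow_add x_pos, add_sub_cancel]
    have rpow_le : x ^ (1 - w) ≤ x ^ (∑ i ∈ Eᶜ, Real.logb x (p i) + u) := by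
      calc x ^ (1 - w) ≤ n := hwn
        _ = (∏ i ∈ Eᶜ, p i : ℕ) * ((∏ i ∈ E, p i) * m : ℕ) := by
            rw [← Nat.cast_mul, ← mul_assoc, Finset.prod_compl_mul_prod, ← h.eq_prod_mul]
        _ ≤ (∏ i ∈ Eᶜ, p i : ℕ) * x ^ u := by gcongr
        _ = x ^ (∑ i ∈ Eᶜ, Real.logb x (p i) + u) := by
            rw [prod_natCast_eq_rpow hx fun i => (h.prime i).pos, ← Real.rpow_add x_pos]
    right
    linarith [(Real.rpow_le_rpow_left_iff hx).1 rpow_le]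

/-- The positive integers up to `x` without divisors strictly between `x ^ u` and `x ^ v`. -/
def divisorFreeSet (u v x : ℝ) : Set ℕ :=
  {n | n ≠ 0 ∧ (n : ℝ) ≤ x ∧ ∀ d : ℕ, d ∣ n → x ^ u < d → x ^ v ≤ d}

theorem finite_divisorFreeSet (u v x : ℝ) : (divisorFreeSet u v x).Finite :=
  (finite_setOf_natCast_le x).subset fun _ hn => hn.2.1

theorem Hcnt_add_ncard_divisorFreeSet (u v : ℝ) (hx : 0 ≤ x) :
    Hcnt x (x ^ u) (x ^ v) + (divisorFreeSet u v x).ncard = ⌊x⌋₊ := by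
  have sdiff_eq : divisorFreeSet u v x = (Finset.Ioc 0 ⌊x⌋₊ : Set ℕ) \
      {n | 1 ≤ n ∧ (n : ℝ) ≤ x ∧ ∃ d : ℕ, d ∣ n ∧ x ^ u < (d : ℝ) ∧ (d : ℝ) < x ^ v} := by
    ext n
    rw [Set.mem_sdiff, Finset.mem_coe, Finset.mem_Ioc, Nat.le_floor_iff hx]
    simp only [divisorFreeSet, mem_ofPred_eq, ← Nat.one_le_iff_ne_zero, Nat.succ_le_iff]
    grind
  rw [Hcnt, sdiff_eq, add_comm, ncard_sdiff_add_ncard_of_subset, ncard_coe_finset, Nat.card_Ioc,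
    Nat.sub_zero]
  exact fun n hn => Finset.mem_coe.2 (Finset.mem_Ioc.2 ⟨hn.1, Nat.le_floor hn.2.1⟩)

theorem topFactorSet_divisorGapRegion_subset (hx : 1 < x) :
    topFactorSet x (divisorGapRegion u v k ∩ Ici fun _ => ε) (fun t => t l) ⊆
      divisorFreeSet u v x := fun _ ⟨hnx, _, _, h, hp, _⟩ =>
  ⟨h.pos.ne', hnx, fun _ hd => h.rpow_le_of_dvd hx hnx hp.1 hd⟩

theorem divisorFreeSet_subset (hx : 1 < x) (huv : 1 < (k + 1) * (v - u)) :
    divisorFreeSet u v x ⊆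
      topFactorSet x (divisorGapRegion (u + w) v k ∩ Ici fun _ => ε) (fun t => t l) ∪
        fewLargePrimeFactors k ε x ∪ {n | n ≠ 0 ∧ (n : ℝ) ≤ x ^ (1 - w)} := by
  rintro n ⟨hn, hnx, hd⟩
  rcases le_or_gt (n : ℝ) (x ^ (1 - w)) with hnw | hwn
  · exact Or.inr ⟨hn, hnw⟩
  by_cases h_few : n ∈ fewLargePrimeFactors k ε x
  · exact Or.inl (Or.inr h_few)
  obtain ⟨p, m, h, hp⟩ : ∃ (p : Fin k → ℕ) (m : ℕ), IsTopFactorization n p m ∧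
      ∀ i, ε ≤ Real.logb x (p i) := by
    by_contra h
    exact h_few ⟨hn, hnx, h⟩
  exact Or.inl (Or.inl ((mem_topFactorSet_apply_iff hx).2
    ⟨hnx, p, m, h, h.logb_mem_divisorGapRegion hx hnx hwn.le huv hd, hp⟩))

theorem IsDickman.tendsto_ncard_topFactorSet_divisorGapRegion (hρ : IsDickman ρ)
    (hl : ∀ i, i ≤ l) (hε : 0 < ε) (u v : ℝ) :
    Tendsto (fun x : ℝ => ((topFactorSet x (divisorGapRegion u v k ∩ Ici fun _ => ε)
      fun t => t l).ncard : ℝ) / x) atTop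
      (𝓝 (∫ t in divisorGapRegion u v k ∩ Ici fun _ => ε,
        topFactorDensity ρ (fun t => t l) t)) := by
  have subset_simplexSet : (divisorGapRegion u v k ∩ Ici fun _ => ε) ⊆
      simplexSet k ∩ Ici fun _ => ε :=
    inter_subset_inter_left _ (divisorGapRegion_subset_simplexSet u v k)
  exact hρ.tendsto_ncard_topFactorSet_div hε
    ((measurableSet_divisorGapRegion u v k).inter measurableSet_Ici)
    (volume_frontier_divisorGapRegion_inter_Ici u v k ε) subset_simplexSet (continuous_apply l)
    fun t ht => pos_and_le_of_mem_inter_Ici hl hε (subset_simplexSet ht)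

theorem IsDickman.eventually_lt_ncard_divisorFreeSet_div (hρ : IsDickman ρ) (hl : ∀ i, i ≤ l)
    {a : ℝ} (ha : a < ∫ t in divisorGapRegion u v k, topFactorDensity ρ (fun t => t l) t) :
    ∀ᶠ x : ℝ in atTop, a < (divisorFreeSet u v x).ncard / x := by
  have cover : AECover (volume.restrict (divisorGapRegion u v k)) (𝓝[>] 0)
      fun ε : ℝ => Ici fun _ : Fin k => ε := (aecover_simplexSet_Ici k).mono
    (Measure.restrict_mono (divisorGapRegion_subset_simplexSet u v k) le_rfl)
  have integral_tendsto := cover.integral_tendsto_of_countably_generated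
    ((hρ.integrableOn_topFactorDensity hl).mono_set (divisorGapRegion_subset_simplexSet u v k))
  obtain ⟨ε, lt_integral, hε⟩ :=
    ((integral_tendsto.eventually (lt_mem_nhds ha)).and self_mem_nhdsWithin).exists
  rw [Measure.restrict_restrict measurableSet_Ici, inter_comm] at lt_integral
  filter_upwards [(hρ.tendsto_ncard_topFactorSet_divisorGapRegion hl hε u v).eventually
    (lt_mem_nhds lt_integral), eventually_gt_atTop 1] with x lt_div hx
  have : 0 < x := one_pos.trans hx
  refine lt_div.trans_le ?_
  gcongr
  · exact finite_divisorFreeSet u v x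
  · exact topFactorSet_divisorGapRegion_subset hx

theorem ncard_divisorFreeSet_div_le (hx : 1 < x) (huv : 1 < (k + 1) * (v - u)) :
    ((divisorFreeSet u v x).ncard : ℝ) / x ≤
      (topFactorSet x (divisorGapRegion (u + w) v k ∩ Ici fun _ => ε) fun t => t l).ncard / x +
        (fewLargePrimeFactors k ε x).ncard / x + x ^ (-w) := by
  have x_pos := one_pos.trans hx
  set small : Set ℕ := {n | n ≠ 0 ∧ (n : ℝ) ≤ x ^ (1 - w)}
  have small_finite : small.Finite := (finite_setOf_natCast_le _).subset fun _ hn => hn.2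
  have small_le : (small.ncard : ℝ) ≤ x ^ (1 - w) :=
    ncard_le_of_forall_mem (Real.rpow_nonneg x_pos.le _) fun _ hn => hn
  have ncard_le := (ncard_le_ncard (divisorFreeSet_subset (w := w) (ε := ε) (l := l) hx huv)
    (((finite_topFactorSet x _ _).union (finite_fewLargePrimeFactors k ε x)).union
      small_finite)).trans ((ncard_union_le _ _).trans
        (Nat.add_le_add_right (ncard_union_le _ _) _))
  have rpow_eq : x ^ (-w) = x ^ (1 - w) / x := by
    rw [sub_eq_neg_add, Real.rpow_add_one x_pos.ne', mul_div_cancel_right₀ _ x_pos.ne']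
  rw [rpow_eq, ← add_div, ← add_div]
  gcongr
  exact (Nat.cast_le.2 ncard_le).trans (by push_cast; gcongr)

theorem IsDickman.eventually_ncard_divisorFreeSet_div_lt (hρ : IsDickman ρ) (hl : ∀ i, i ≤ l)
    (huv : 1 < (k + 1) * (v - u)) {b : ℝ}
    (hb : ∫ t in divisorGapRegion u v k, topFactorDensity ρ (fun t => t l) t < b) :
    ∀ᶠ x : ℝ in atTop, (divisorFreeSet u v x).ncard / x < b := by
  have integrable := hρ.integrableOn_topFactorDensity hl
  obtain ⟨c, integral_lt, hcb⟩ := exists_between hb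
  have shift_tendsto : Tendsto (fun w => u + w) (𝓝[>] 0) (𝓝[≥] u) := by
    refine tendsto_nhdsWithin_iff.2 ⟨?_, ?_⟩
    · exact ((continuous_const_add u).tendsto' 0 u (add_zero u)).mono_left nhdsWithin_le_nhds
    · filter_upwards [self_mem_nhdsWithin] with w hw
      exact le_add_of_nonneg_right (mem_Ioi.1 hw).le
  obtain ⟨w, integral_shift_lt, hw⟩ := (((continuousWithinAt_setIntegral_divisorGapRegion
    integrable u v).tendsto.comp shift_tendsto |>.eventually (gt_mem_nhds integral_lt)).and
    self_mem_nhdsWithin).exists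
  obtain ⟨ε, hε, few_le⟩ := hρ.exists_eventually_ncard_fewLargePrimeFactors_le k ((b - c) / 2)
    (half_pos (sub_pos.2 hcb))
  have inter_lt : ∫ t in divisorGapRegion (u + w) v k ∩ Ici fun _ => ε,
      topFactorDensity ρ (fun t => t l) t < c := by
    refine (setIntegral_mono_set (integrable.mono_set
      (divisorGapRegion_subset_simplexSet _ v k)) ?_ inter_subset_left.eventuallyLE).trans_lt
      integral_shift_lt
    filter_upwards [ae_restrict_mem (measurableSet_divisorGapRegion (u + w) v k)] with t ht
    exact hρ.topFactorDensity_nonneg ht.1 (ht.1.2.1 l)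
  filter_upwards [few_le, (tendsto_rpow_neg_atTop hw).eventually
    (gt_mem_nhds (half_pos (sub_pos.2 hcb))), eventually_gt_atTop 1,
    (hρ.tendsto_ncard_topFactorSet_divisorGapRegion hl hε (u + w) v).eventually
      (gt_mem_nhds inter_lt)] with x few_le rpow_lt hx top_lt
  linarith [ncard_divisorFreeSet_div_le (w := w) (ε := ε) (l := l) hx huv]

theorem IsDickman.tendsto_ncard_divisorFreeSet_div (hρ : IsDickman ρ) (hl : ∀ i, i ≤ l)
    (huv : 1 < (k + 1) * (v - u)) :
    Tendsto (fun x : ℝ => ((divisorFreeSet u v x).ncard : ℝ) / x) atTop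
      (𝓝 (∫ t in divisorGapRegion u v k, topFactorDensity ρ (fun t => t l) t)) :=
  tendsto_order.2 ⟨fun _ => hρ.eventually_lt_ncard_divisorFreeSet_div hl,
    fun _ => hρ.eventually_ncard_divisorFreeSet_div_lt hl huv⟩

end DivisorFree

theorem stmt_1 (ρ : ℝ → ℝ) (hρcont : ContinuousOn ρ (Set.Ici 0))
    (hρ_one : ∀ t : ℝ, 0 ≤ t → t ≤ 1 → ρ t = 1)
    (hρ_deriv : ∀ t : ℝ, 1 < t → HasDerivAt ρ (-ρ (t - 1) / t) t)
    (u v : ℝ) (hu : 0 ≤ u) (huv : u < v) (hv : v ≤ 1)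
    (k : ℕ) (hk : k = ⌊1 / (v - u)⌋₊) :
    Tendsto (fun x : ℝ => (Hcnt x (x ^ u) (x ^ v) : ℝ) / x) atTop
      (nhds (1 - ∑ ℰ : Finset (Finset (Fin k)),
        ∫ t in Puv u v ℰ,
          ρ ((1 - ∑ i, t i) / t ⟨k - 1, by
              have hk0 : 0 < k := by
                rw [hk]
                exact Nat.floor_pos.mpr (one_le_one_div (by linarith) (by linarith))
              omega⟩) / ∏ i, t i)) := by
  have hρ : IsDickman ρ := ⟨hρcont, hρ_one, hρ_deriv⟩
  have one_lt_mul : 1 < ((k : ℝ) + 1) * (v - u) := by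
    rw [hk, ← div_lt_iff₀ (sub_pos.2 huv)]
    exact Nat.lt_floor_add_one _
  have k_pos : 0 < k := by
    rw [hk]
    exact Nat.floor_pos.2 (one_le_one_div (by linarith) (by linarith))
  have le_last (i : Fin k) : i ≤ ⟨k - 1, Nat.sub_one_lt_of_lt k_pos⟩ := Nat.le_sub_one_of_lt i.2
  have density_tendsto := (tendsto_nat_floor_div_atTop (R := ℝ)).sub
    (hρ.tendsto_ncard_divisorFreeSet_div le_last one_lt_mul)
  rw [← sum_setIntegral_Puv (hρ.integrableOn_topFactorDensity le_last) huv] at density_tendsto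
  refine density_tendsto.congr' ?_
  filter_upwards [eventually_gt_atTop 0] with x hx
  rw [← sub_div, ← Hcnt_add_ncard_divisorFreeSet u v hx.le, Nat.cast_add, add_sub_cancel_right]
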